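/- Let n range over positive integers. For each n, let D(n) be the set of quadruples (n,a,b,c) ∈ ℤ⁴ with gcd(n,a,b,c)=1 satisfying (n+a+b+c)² = 2(n²+a²+b²+c²) and n+a ≥ 0, n+b ≥ 0, and let ID(n) be the (finite) set of orbits of D(n) under the group Ap₁. Let ID₀(n) ⊆ ID(n) be the set of orbits containing some quadruple with a nonpositive entry. Then the ratio |ID₀(n)|/|ID(n)| tends to 3/π as n → ∞. -/

import Mathlib

open Matrix

/-- The Apollonian move `S₄`. -/
def S₄ : Matrix (Fin 4) (Fin 4) ℤ := !![1,0,0,0; 0,1,0,0; 0,0,1,0; 2,2,2,-1]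

/-- The permutation matrix swapping coordinates 2 and 3. -/
def P₂₃ : Matrix (Fin 4) (Fin 4) ℤ := !![1,0,0,0; 0,0,1,0; 0,1,0,0; 0,0,0,1]

/-- The permutation matrix swapping coordinates 2 and 4. -/
def P₂₄ : Matrix (Fin 4) (Fin 4) ℤ := !![1,0,0,0; 0,0,0,1; 0,0,1,0; 0,1,0,0]

/-- The group `Ap₁` generated by `P₂₃`, `P₂₄`, `S₄`; since the generators are
involutions, it consists exactly of all finite products of the generators. -/
def Ap₁ : Submonoid (Matrix (Fin 4) (Fin 4) ℤ) := Submonoid.closure {P₂₃, P₂₄, S₄}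

/-- The set of primitive integral Descartes quadruples `(n, a, b, c)` with
`n + a ≥ 0` and `n + b ≥ 0`. -/
def DSet (n : ℤ) : Set (Fin 4 → ℤ) :=
  {q | q 0 = n ∧
    Int.gcd (Int.gcd (Int.gcd (q 0) (q 1) : ℤ) (q 2) : ℤ) (q 3) = 1 ∧
    (q 0 + q 1 + q 2 + q 3) ^ 2 = 2 * ((q 0) ^ 2 + (q 1) ^ 2 + (q 2) ^ 2 + (q 3) ^ 2) ∧
    0 ≤ q 0 + q 1 ∧ 0 ≤ q 0 + q 2}

/-- The set of `Ap₁`-orbits of elements of `D(n)`. -/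
def ID (n : ℤ) : Set (Set (Fin 4 → ℤ)) :=
  {O | ∃ q ∈ DSet n, O = {q' | ∃ M ∈ Ap₁, q' = M.mulVec q}}

/-- The orbits containing a quadruple with a nonpositive entry. -/
def ID₀ (n : ℤ) : Set (Set (Fin 4 → ℤ)) :=
  {O ∈ ID n | ∃ q ∈ O, ∃ i : Fin 4, q i ≤ 0}

namespace ApollonianStair

open MeasureTheory

theorem finite_norm_sub_le (c : ℂ) (ρ : ℝ) : {w : GaussianInt | ‖(w : ℂ) - c‖ ≤ ρ}.Finite := by
  have h : ({w : GaussianInt | ‖(w : ℂ) - c‖ ≤ ρ}) ⊆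
      (fun p : ℤ × ℤ => (⟨p.1, p.2⟩ : GaussianInt)) ''
        (Set.Icc ⌊c.re - ρ⌋ ⌈c.re + ρ⌉ ×ˢ Set.Icc ⌊c.im - ρ⌋ ⌈c.im + ρ⌉) := by
    intro w hw
    have h1 := (Complex.abs_re_le_norm _).trans hw
    have h2 := (Complex.abs_im_le_norm _).trans hw
    rw [abs_le] at h1 h2
    simp only [Complex.sub_re, Complex.sub_im, ← GaussianInt.intCast_re,
      ← GaussianInt.intCast_im] at h1 h2
    refine ⟨(w.re, w.im), ⟨⟨?_, ?_⟩, ⟨?_, ?_⟩⟩, rfl⟩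
    · exact Int.cast_le.mp ((Int.floor_le _).trans (by linarith : c.re - ρ ≤ (w.re : ℝ)))
    · exact Int.cast_le.mp ((by linarith : (w.re : ℝ) ≤ c.re + ρ).trans (Int.le_ceil _))
    · exact Int.cast_le.mp ((Int.floor_le _).trans (by linarith : c.im - ρ ≤ (w.im : ℝ)))
    · exact Int.cast_le.mp ((by linarith : (w.im : ℝ) ≤ c.im + ρ).trans (Int.le_ceil _))
  exact (((Set.finite_Icc _ _).prod (Set.finite_Icc _ _)).image _).subset h

/-- The half-open unit square with lower left corner `w`. -/
def unitSquare (w : GaussianInt) : Set ℂ :=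
  Complex.measurableEquivRealProd ⁻¹'
    (Set.Ico (w.re : ℝ) (w.re + 1) ×ˢ Set.Ico (w.im : ℝ) (w.im + 1))

theorem mem_unitSquare {w : GaussianInt} {z : ℂ} :
    z ∈ unitSquare w ↔ ⌊z.re⌋ = w.re ∧ ⌊z.im⌋ = w.im := by
  simp [unitSquare, Complex.measurableEquivRealProd_apply, Int.floor_eq_iff]

theorem measurableSet_unitSquare (w : GaussianInt) : MeasurableSet (unitSquare w) :=
  Complex.measurableEquivRealProd.measurable (measurableSet_Ico.prod measurableSet_Ico)

theorem volume_unitSquare (w : GaussianInt) : volume (unitSquare w) = 1 := by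
  rw [unitSquare, Complex.volume_preserving_equiv_real_prod.measure_preimage
    (measurableSet_Ico.prod measurableSet_Ico).nullMeasurableSet, Measure.volume_eq_prod,
    Measure.prod_prod]
  simp

theorem norm_sub_le_of_mem_unitSquare {w : GaussianInt} {z : ℂ} (h : z ∈ unitSquare w) :
    ‖z - w‖ ≤ 2 := by
  rw [mem_unitSquare] at h
  refine (Complex.norm_le_abs_re_add_abs_im _).trans ?_
  simp only [Complex.sub_re, Complex.sub_im, ← GaussianInt.intCast_re,
      ← GaussianInt.intCast_im, ← h.1, ← h.2]
  have h1 := Int.fract_nonneg z.re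
  have h2 := Int.fract_nonneg z.im
  have h3 := Int.fract_lt_one z.re
  have h4 := Int.fract_lt_one z.im
  simp only [Int.fract] at h1 h2 h3 h4
  rw [abs_of_nonneg h1, abs_of_nonneg h2]
  linarith

/-- Counting Gaussian integers in a disc with arbitrary centre. -/
theorem abs_ncard_sub_le (c : ℂ) {ρ : ℝ} (hρ : 0 ≤ ρ) :
    |({w : GaussianInt | ‖(w : ℂ) - c‖ ≤ ρ}.ncard : ℝ) - Real.pi * ρ ^ 2|
      ≤ 4 * Real.pi * (ρ + 1) := by
  have hfin := finite_norm_sub_le c ρ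
  set S := hfin.toFinset with hS
  have hmem : ∀ w, w ∈ S ↔ ‖(w : ℂ) - c‖ ≤ ρ := fun w => by simp [hS]
  rw [Set.ncard_eq_toFinset_card _ hfin, ← hS]
  have hvol : volume (⋃ w ∈ S, unitSquare w) = (S.card : ENNReal) := by
    rw [measure_biUnion_finset]
    · simp [volume_unitSquare]
    · intro w _ w' _ hne
      refine Set.disjoint_left.mpr fun z hz hz' => hne ?_
      rw [mem_unitSquare] at hz hz'
      exact Zsqrtd.ext (hz.1.symm.trans hz'.1) (hz.2.symm.trans hz'.2)
    · exact fun w _ => measurableSet_unitSquare w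
  have hup : (S.card : ℝ) ≤ Real.pi * (ρ + 2) ^ 2 := by
    have : (⋃ w ∈ S, unitSquare w) ⊆ Metric.closedBall c (ρ + 2) := by
      intro z hz
      simp only [Set.mem_iUnion, exists_prop] at hz
      obtain ⟨w, hw, hz⟩ := hz
      rw [Metric.mem_closedBall, dist_eq_norm]
      calc ‖z - c‖ = ‖((w : ℂ) - c) + (z - w)‖ := by congr 1; ring
        _ ≤ _ := (norm_add_le _ _).trans
          (add_le_add ((hmem w).1 hw) (norm_sub_le_of_mem_unitSquare hz))
    have := measure_mono (μ := volume) this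
    rw [hvol, Complex.volume_closedBall] at this
    have := ENNReal.toReal_mono (by finiteness) this
    simp only [ENNReal.toReal_natCast, ENNReal.toReal_mul, ENNReal.toReal_pow,
      ENNReal.toReal_ofReal (by linarith : 0 ≤ ρ + 2), ENNReal.coe_toReal,
      NNReal.coe_real_pi] at this
    linarith
  have hlow : 2 ≤ ρ → Real.pi * (ρ - 2) ^ 2 ≤ (S.card : ℝ) := by
    intro h2
    have : Metric.closedBall c (ρ - 2) ⊆ (⋃ w ∈ S, unitSquare w) := by
      intro z hz
      rw [Metric.mem_closedBall, dist_eq_norm] at hz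
      simp only [Set.mem_iUnion, exists_prop]
      have hzw : z ∈ unitSquare ⟨⌊z.re⌋, ⌊z.im⌋⟩ := mem_unitSquare.2 ⟨rfl, rfl⟩
      refine ⟨_, (hmem _).2 ?_, hzw⟩
      have h3 := norm_sub_le_of_mem_unitSquare hzw
      rw [norm_sub_rev] at h3
      set w : GaussianInt := ⟨⌊z.re⌋, ⌊z.im⌋⟩
      calc ‖(w : ℂ) - c‖ = ‖((w : ℂ) - z) + (z - c)‖ := by congr 1; ring
        _ ≤ _ := (norm_add_le _ _).trans (by linarith)
    have := measure_mono (μ := volume) this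
    rw [hvol, Complex.volume_closedBall] at this
    have := ENNReal.toReal_mono (by finiteness) this
    simp only [ENNReal.toReal_natCast, ENNReal.toReal_mul, ENNReal.toReal_pow,
      ENNReal.toReal_ofReal (by linarith : 0 ≤ ρ - 2), ENNReal.coe_toReal,
      NNReal.coe_real_pi] at this
    linarith
  have hpi := Real.pi_pos
  rw [abs_le]
  constructor
  · rcases le_total 2 ρ with h | h
    · have := hlow h
      nlinarith
    · have : (0 : ℝ) ≤ S.card := by positivity
      nlinarith [mul_nonneg hpi.le (mul_nonneg hρ (sub_nonneg.2 h)), mul_nonneg hpi.le hρ]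
  · nlinarith [hup]

theorem finite_norm_le (X : ℝ) : {v : GaussianInt | v ≠ 0 ∧ (v.norm : ℝ) ≤ X}.Finite := by
  refine (finite_norm_sub_le 0 (√X)).subset fun v hv => ?_
  simp only [Set.mem_ofPred_eq, sub_zero] at hv ⊢
  refine Real.le_sqrt_of_sq_le ?_
  rw [← Complex.normSq_eq_norm_sq, ← GaussianInt.intCast_real_norm]
  exact hv.2

/-- The nonzero Gaussian integers of norm at most `X`. -/
noncomputable def disc (X : ℝ) : Finset GaussianInt := (finite_norm_le X).toFinset

@[simp]
theorem mem_disc {X : ℝ} {v : GaussianInt} : v ∈ disc X ↔ v ≠ 0 ∧ (v.norm : ℝ) ≤ X := by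
  simp [disc]

theorem norm_cast_eq_sq (v : GaussianInt) : (v.norm : ℝ) = ‖(v : ℂ)‖ ^ 2 := by
  rw [← Complex.normSq_eq_norm_sq, ← GaussianInt.intCast_real_norm]

theorem one_le_norm {v : GaussianInt} (hv : v ≠ 0) : (1 : ℝ) ≤ v.norm := by
  exact_mod_cast GaussianInt.norm_pos.2 hv

theorem abs_card_disc_sub_le {X : ℝ} (hX : 0 ≤ X) :
    |((disc X).card : ℝ) - Real.pi * X| ≤ (8 * Real.pi + 1) * √X := by
  have hpi := Real.pi_pos
  have hsq := Real.sq_sqrt hX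
  have hs0 := Real.sqrt_nonneg X
  rcases lt_or_ge X 1 with h | h
  · have : disc X = ∅ := by
      refine Finset.eq_empty_of_forall_notMem fun v hv => ?_
      rw [mem_disc] at hv
      linarith [one_le_norm hv.1, hv.2]
    have hs1 : √X ≤ 1 := (Real.sqrt_le_sqrt h.le).trans_eq Real.sqrt_one
    rw [this, Finset.card_empty, Nat.cast_zero, zero_sub, abs_neg, abs_of_nonneg (by positivity)]
    nlinarith [mul_nonneg hpi.le (mul_nonneg hs0 (sub_nonneg.2 hs1)), mul_nonneg hpi.le hs0]
  · have hs1 : 1 ≤ √X := Real.one_le_sqrt.2 h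
    have key := abs_ncard_sub_le 0 hs0
    have hset : {w : GaussianInt | ‖(w : ℂ) - 0‖ ≤ √X} = insert 0 (disc X : Set GaussianInt) := by
      ext w
      have : ‖(w : ℂ)‖ ≤ √X ↔ (w.norm : ℝ) ≤ X := by
        rw [norm_cast_eq_sq, Real.le_sqrt (norm_nonneg _) hX]
      simp only [sub_zero, Set.mem_ofPred_eq, this, Set.mem_insert_iff, Finset.mem_coe, mem_disc]
      by_cases hw : w = 0
      · simp [hw, hX]
      · simp [hw]
    rw [hset, Set.ncard_insert_of_notMem (by simp), Set.ncard_coe_finset, hsq] at key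
    push_cast at key
    rw [abs_le] at key ⊢
    constructor <;> nlinarith [key.1, key.2, mul_nonneg hpi.le (sub_nonneg.2 hs1)]

open scoped Classical in
/-- The nonzero Gaussian integers of norm at most `X` divisible by no element of `S`. -/
noncomputable def sieved (S : Finset GaussianInt) (X : ℝ) : Finset GaussianInt :=
  (disc X).filter fun w => ∀ p ∈ S, ¬ p ∣ w

theorem mem_sieved {S : Finset GaussianInt} {X : ℝ} {w : GaussianInt} :
    w ∈ sieved S X ↔ (w ≠ 0 ∧ (w.norm : ℝ) ≤ X) ∧ ∀ p ∈ S, ¬ p ∣ w := by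
  simp [sieved]

theorem card_sieved_insert {S : Finset GaussianInt} {a : GaussianInt} (ha : Prime a)
    (hS : ∀ p ∈ S, Prime p) (hne : ∀ p ∈ S, ¬ Associated p a) (X : ℝ) :
    ((sieved (insert a S) X).card : ℝ) =
      (sieved S X).card - (sieved S (X / a.norm)).card := by
  have hN := one_le_norm ha.ne_zero
  have himg : ((sieved S (X / a.norm)).image (a * ·)).card = (sieved S (X / a.norm)).card :=
    Finset.card_image_of_injective _ fun x y h => mul_left_cancel₀ ha.ne_zero h
  have hdisj : Disjoint (sieved (insert a S) X) ((sieved S (X / a.norm)).image (a * ·)) := by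
    rw [Finset.disjoint_left]
    intro w hw hw'
    obtain ⟨z, _, rfl⟩ := Finset.mem_image.1 hw'
    exact (mem_sieved.1 hw).2 a (Finset.mem_insert_self _ _) (dvd_mul_right _ _)
  have hunion : sieved (insert a S) X ∪ (sieved S (X / a.norm)).image (a * ·) = sieved S X := by
    ext w
    simp only [Finset.mem_union, Finset.mem_image, mem_sieved, Finset.forall_mem_insert]
    constructor
    · rintro (⟨h, -, h'⟩ | ⟨z, ⟨⟨hz0, hz⟩, hzS⟩, rfl⟩)
      · exact ⟨h, h'⟩
      · refine ⟨⟨mul_ne_zero ha.ne_zero hz0, ?_⟩, fun p hp hdvd => ?_⟩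
        · rw [le_div_iff₀ (by linarith)] at hz
          rw [Zsqrtd.norm_mul]; push_cast; linarith
        · rcases (hS p hp).dvd_or_dvd hdvd with h | h
          · exact hne p hp ((hS p hp).associated_of_dvd ha h)
          · exact hzS p hp h
    · rintro ⟨⟨hw0, hw⟩, hwS⟩
      by_cases hd : a ∣ w
      · obtain ⟨z, rfl⟩ := hd
        refine Or.inr
          ⟨z, ⟨⟨right_ne_zero_of_mul hw0, ?_⟩, fun p hp h => hwS p hp (h.mul_left _)⟩, rfl⟩
        rw [le_div_iff₀ (by linarith)]
        rw [Zsqrtd.norm_mul] at hw; push_cast at hw; linarith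
      · exact Or.inl ⟨⟨hw0, hw⟩, hd, hwS⟩
  rw [← hunion, Finset.card_union_of_disjoint hdisj, himg]
  push_cast; ring

/-- Sieving by a finite set of Gaussian primes. -/
theorem abs_card_sieved_sub_le (S : Finset GaussianInt) (hS : ∀ p ∈ S, Prime p)
    (hne : ∀ p ∈ S, ∀ q ∈ S, Associated p q → p = q) {X : ℝ} (hX : 0 ≤ X) :
    |((sieved S X).card : ℝ) - Real.pi * X * ∏ p ∈ S, (1 - 1 / (p.norm : ℝ))|
      ≤ 2 ^ S.card * ((8 * Real.pi + 1) * √X) := by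
  induction S using Finset.induction_on generalizing X with
  | empty => simpa [sieved] using abs_card_disc_sub_le hX
  | insert a S haS ih =>
    have ha := hS a (Finset.mem_insert_self _ _)
    have hS' : ∀ p ∈ S, Prime p := fun p hp => hS p (Finset.mem_insert_of_mem hp)
    have hne' : ∀ p ∈ S, ∀ q ∈ S, Associated p q → p = q := fun p hp q hq =>
      hne p (Finset.mem_insert_of_mem hp) q (Finset.mem_insert_of_mem hq)
    have hN := one_le_norm ha.ne_zero
    have hX' : 0 ≤ X / a.norm := by positivity
    have h1 := ih hS' hne' hX
    have h2 := ih hS' hne' hX'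
    have h3 : √(X / a.norm) ≤ √X := Real.sqrt_le_sqrt (div_le_self hX hN)
    rw [card_sieved_insert ha hS' (fun p hp h => haS
      (hne p (Finset.mem_insert_of_mem hp) a (Finset.mem_insert_self _ _) h ▸ hp)),
      Finset.prod_insert haS, Finset.card_insert_of_notMem haS]
    set P := ∏ p ∈ S, (1 - 1 / (p.norm : ℝ))
    have hpi := Real.pi_pos
    have h4 : (2 : ℝ) ^ S.card * ((8 * Real.pi + 1) * √(X / a.norm)) ≤
        2 ^ S.card * ((8 * Real.pi + 1) * √X) := by gcongr
    have e : ((sieved S X).card : ℝ) - (sieved S (X / a.norm)).card -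
        Real.pi * X * ((1 - 1 / (a.norm : ℝ)) * P) =
        (((sieved S X).card : ℝ) - Real.pi * X * P) -
        ((sieved S (X / a.norm)).card - Real.pi * (X / a.norm) * P) := by
      field_simp
      ring
    rw [e]
    refine (abs_sub _ _).trans ?_
    rw [pow_succ]
    linarith

open UniqueFactorizationMonoid in
theorem exists_prime_representatives {m : ℕ} (hm : m ≠ 0) :
    ∃ S : Finset GaussianInt, (∀ p ∈ S, Prime p) ∧
      (∀ p ∈ S, ∀ q ∈ S, Associated p q → p = q) ∧
      (∀ p ∈ S, p ∣ (m : GaussianInt)) ∧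
      (∀ p : GaussianInt, Prime p → p ∣ (m : GaussianInt) → ∃ q ∈ S, Associated p q) ∧
      (∏ p ∈ S, p) ∣ (m : GaussianInt) := by
  classical
  let _ : StrongNormalizationMonoid GaussianInt :=
    UniqueFactorizationMonoid.strongNormalizationMonoid
  have hm' : (m : GaussianInt) ≠ 0 := Nat.cast_ne_zero.2 hm
  refine ⟨(normalizedFactors (m : GaussianInt)).toFinset, ?_, ?_, ?_, ?_, ?_⟩
  · exact fun p hp => prime_of_normalized_factor p (Multiset.mem_toFinset.1 hp)
  · intro p hp q hq h
    have := normalize_eq_normalize_iff_associated.2 h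
    rwa [normalize_normalized_factor p (Multiset.mem_toFinset.1 hp),
      normalize_normalized_factor q (Multiset.mem_toFinset.1 hq)] at this
  · exact fun p hp => dvd_of_mem_normalizedFactors (Multiset.mem_toFinset.1 hp)
  · intro p hp hd
    obtain ⟨q, hq, h⟩ := exists_mem_normalizedFactors_of_dvd hm' hp.irreducible hd
    exact ⟨q, Multiset.mem_toFinset.2 hq, h⟩
  · refine dvd_trans ?_ (prod_normalizedFactors hm').dvd
    have : ∏ p ∈ (normalizedFactors (m : GaussianInt)).toFinset, p =
        (normalizedFactors (m : GaussianInt)).dedup.prod := by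
      rw [Finset.prod, Multiset.toFinset_val, Multiset.map_id']
    rw [this]
    exact Multiset.prod_dvd_prod_of_le (Multiset.dedup_le _)

open scoped Classical in
/-- Representatives up to units of the Gaussian primes dividing `m`. -/
noncomputable def primeSet (m : ℕ) : Finset GaussianInt :=
  if hm : m ≠ 0 then (exists_prime_representatives hm).choose else ∅

theorem primeSet_spec {m : ℕ} (hm : m ≠ 0) : (∀ p ∈ primeSet m, Prime p) ∧
      (∀ p ∈ primeSet m, ∀ q ∈ primeSet m, Associated p q → p = q) ∧
      (∀ p ∈ primeSet m, p ∣ (m : GaussianInt)) ∧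
      (∀ p : GaussianInt, Prime p → p ∣ (m : GaussianInt) → ∃ q ∈ primeSet m, Associated p q) ∧
      (∏ p ∈ primeSet m, p) ∣ (m : GaussianInt) := by
  rw [primeSet, dif_pos hm]
  exact (exists_prime_representatives hm).choose_spec

theorem card_primeSet_le_of_dvd {m n : ℕ} (hn : n ≠ 0) (h : m ∣ n) :
    (primeSet m).card ≤ (primeSet n).card := by
  have hm : m ≠ 0 := ne_zero_of_dvd_ne_zero hn h
  obtain ⟨h1, h2, h3, h4, -⟩ := primeSet_spec hm
  obtain ⟨k1, k2, k3, k4, -⟩ := primeSet_spec hn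
  have : ∀ p ∈ primeSet m, ∃ q ∈ primeSet n, Associated p q := fun p hp =>
    k4 p (h1 p hp) ((h3 p hp).trans (Nat.cast_dvd_cast h))
  choose! f hf hf' using this
  exact Finset.card_le_card_of_injOn f hf fun p hp q hq e =>
    h2 p hp q hq ((hf' p hp).trans (e ▸ (hf' q hq).symm))

theorem two_le_norm_of_prime {p : GaussianInt} (hp : Prime p) : 2 ≤ p.norm := by
  have h1 := GaussianInt.norm_pos.2 hp.ne_zero
  have h2 : p.norm ≠ 1 := fun h =>
    hp.not_isUnit ((Zsqrtd.norm_eq_one_iff' (by norm_num) p).1 h)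
  omega

theorem exists_two_pow_card_primeSet_le {ε : ℝ} (hε : 0 < ε) :
    ∃ K : ℝ, 0 < K ∧ ∀ m : ℕ, m ≠ 0 → (2 : ℝ) ^ (primeSet m).card ≤ K * (m : ℝ) ^ ε := by
  obtain ⟨B, hB⟩ : ∃ B : ℝ, ∀ x : ℝ, B < x → 2 ≤ x ^ (ε / 2) := by
    obtain ⟨B, hB⟩ := Filter.eventually_atTop.1
      ((tendsto_rpow_atTop (half_pos hε)).eventually_ge_atTop 2)
    exact ⟨B, fun x hx => hB x hx.le⟩
  refine ⟨2 ^ (disc B).card, by positivity, fun m hm => ?_⟩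
  obtain ⟨h1, -, -, -, h5⟩ := primeSet_spec hm
  have hnorm : (∏ p ∈ primeSet m, (p.norm : ℝ)) ≤ (m : ℝ) ^ 2 := by
    have e : (∏ p ∈ primeSet m, p).norm = ∏ p ∈ primeSet m, p.norm :=
      map_prod (Zsqrtd.normMonoidHom (d := -1)) _ _
    obtain ⟨c, hc⟩ := h5
    have h6 : (∏ p ∈ primeSet m, p.norm) ∣ (m : ℤ) ^ 2 := by
      refine ⟨c.norm, ?_⟩
      rw [← e, ← Zsqrtd.norm_mul, ← hc, Zsqrtd.norm_natCast, sq]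
    have h7 := Int.le_of_dvd (by positivity) h6
    exact_mod_cast h7
  have hpos : ∀ p ∈ primeSet m, (2 : ℝ) ≤ p.norm := fun p hp => by
    exact_mod_cast two_le_norm_of_prime (h1 p hp)
  calc (2 : ℝ) ^ (primeSet m).card = ∏ p ∈ primeSet m, (2 : ℝ) := by simp
    _ ≤ ∏ p ∈ primeSet m, ((if (p.norm : ℝ) ≤ B then 2 else 1) * (p.norm : ℝ) ^ (ε / 2)) := by
        refine Finset.prod_le_prod (fun _ _ => by norm_num) fun p hp => ?_
        have h := hpos p hp
        split_ifs with hB'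
        · have := Real.one_le_rpow (by linarith : 1 ≤ (p.norm : ℝ)) (half_pos hε).le
          linarith
        · rw [one_mul]; exact hB _ (not_le.1 hB')
    _ = 2 ^ ((primeSet m).filter fun p => (p.norm : ℝ) ≤ B).card *
          (∏ p ∈ primeSet m, (p.norm : ℝ)) ^ (ε / 2) := by
        rw [Finset.prod_mul_distrib, Finset.prod_ite, Real.finsetProd_rpow]
        · simp
        · exact fun p hp => by linarith [hpos p hp]
    _ ≤ 2 ^ (disc B).card * ((m : ℝ) ^ 2) ^ (ε / 2) := by
        have h0 : 0 ≤ ∏ p ∈ primeSet m, (p.norm : ℝ) :=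
          Finset.prod_nonneg fun p hp => zero_le_two.trans (hpos p hp)
        refine mul_le_mul (pow_le_pow_right₀ one_le_two (Finset.card_le_card fun p hp => ?_))
          (Real.rpow_le_rpow h0 hnorm (half_pos hε).le) (Real.rpow_nonneg h0 _) (by positivity)
        rw [Finset.mem_filter] at hp
        exact mem_disc.2 ⟨(h1 p hp.1).ne_zero, hp.2⟩
    _ = _ := by
        rw [← Real.rpow_natCast (m : ℝ) 2, ← Real.rpow_mul (by positivity)]
        congr 2
        push_cast; ring

theorem exists_card_divisors_le {ε : ℝ} (hε : 0 < ε) :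
    ∃ K : ℝ, 0 < K ∧ ∀ n : ℕ, n ≠ 0 → (n.divisors.card : ℝ) ≤ K * (n : ℝ) ^ ε := by
  obtain ⟨B, hB⟩ : ∃ B : ℕ, ∀ p : ℕ, B ≤ p → (2 : ℝ) ≤ (p : ℝ) ^ ε := by
    obtain ⟨B, hB⟩ := Filter.eventually_atTop.1
      (((tendsto_rpow_atTop hε).comp tendsto_natCast_atTop_atTop).eventually_ge_atTop 2)
    exact ⟨B, hB⟩
  have hl : 0 < ε * Real.log 2 := mul_pos hε (Real.log_pos one_lt_two)
  set M : ℝ := 1 / (ε * Real.log 2) + 1 with hM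
  have hM1 : 1 ≤ M := by rw [hM]; linarith [div_pos one_pos hl]
  refine ⟨M ^ B, by positivity, fun n hn => ?_⟩
  have hn' : (n : ℝ) ^ ε = ∏ p ∈ n.primeFactors, ((p : ℝ) ^ ε) ^ (n.factorization p) := by
    conv_lhs => rw [← Nat.prod_factorization_pow_eq_self hn]
    rw [Finsupp.prod, Nat.support_factorization, Nat.cast_prod, ← Real.finsetProd_rpow]
    · refine Finset.prod_congr rfl fun p _ => ?_
      rw [Nat.cast_pow, ← Real.rpow_natCast, ← Real.rpow_mul (by positivity), mul_comm,
        Real.rpow_mul (by positivity), Real.rpow_natCast]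
    · exact fun _ _ => by positivity
  rw [Nat.card_divisors hn, hn']
  push_cast
  calc ∏ p ∈ n.primeFactors, ((n.factorization p : ℝ) + 1)
      ≤ ∏ p ∈ n.primeFactors, ((if p < B then M else 1) *
          ((p : ℝ) ^ ε) ^ (n.factorization p)) := by
        refine Finset.prod_le_prod (fun _ _ => by positivity) fun p hp => ?_
        set k := n.factorization p
        have hp2 : (2 : ℝ) ≤ p := by exact_mod_cast (Nat.prime_of_mem_primeFactors hp).two_le
        split_ifs with hpB
        · have h1 : ((2 : ℝ) ^ ε) ^ k ≤ ((p : ℝ) ^ ε) ^ k := by gcongr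
          have h2 : (k : ℝ) * (ε * Real.log 2) ≤ ((2 : ℝ) ^ ε) ^ k := by
            rw [Real.rpow_def_of_pos two_pos, ← Real.exp_nat_mul]
            have := Real.add_one_le_exp (k * (Real.log 2 * ε))
            linarith
          have h3 : (1 : ℝ) ≤ ((2 : ℝ) ^ ε) ^ k :=
            one_le_pow₀ (Real.one_le_rpow one_le_two hε.le)
          have h4 : (k : ℝ) ≤ 1 / (ε * Real.log 2) * ((2 : ℝ) ^ ε) ^ k := by
            rw [div_mul_eq_mul_div, one_mul, le_div_iff₀ hl]; exact h2
          calc (k : ℝ) + 1 ≤ M * ((2 : ℝ) ^ ε) ^ k := by rw [hM]; linarith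
            _ ≤ _ := by gcongr
        · rw [one_mul]
          calc (k : ℝ) + 1 ≤ 2 ^ k := by exact_mod_cast Nat.lt_two_pow_self
            _ ≤ _ := by gcongr; exact hB p (not_lt.1 hpB)
    _ = M ^ (n.primeFactors.filter (· < B)).card *
          ∏ p ∈ n.primeFactors, ((p : ℝ) ^ ε) ^ (n.factorization p) := by
        rw [Finset.prod_mul_distrib, Finset.prod_ite]
        simp
    _ ≤ _ := by
        gcongr
        refine (Finset.card_le_card fun p hp => ?_).trans (Finset.card_range B).le
        exact Finset.mem_range.2 (Finset.mem_filter.1 hp).2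

/-- The imaginary part of `v * star u` modulo `n`. -/
def cross (n : ℕ) (v : GaussianInt) (u : ZMod n × ZMod n) : ZMod n :=
  (v.im : ZMod n) * u.1 - (v.re : ZMod n) * u.2

open scoped Classical in
/-- The invertible elements of `ℤ[i] / n`, as pairs of coordinates. -/
noncomputable def gaussUnits (n : ℕ) [NeZero n] : Finset (ZMod n × ZMod n) :=
  Finset.univ.filter fun u => IsUnit (u.1 ^ 2 + u.2 ^ 2)

theorem mem_gaussUnits {n : ℕ} [NeZero n] {u : ZMod n × ZMod n} :
    u ∈ gaussUnits n ↔ IsUnit (u.1 ^ 2 + u.2 ^ 2) := by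
  simp [gaussUnits]

/-- The number of invertible residues `u` whose lattice `{v | cross n v u = 0}` contains `v`. -/
noncomputable def weight (n : ℕ) [NeZero n] (v : GaussianInt) : ℕ :=
  ((gaussUnits n).filter fun u => cross n v u = 0).card

theorem isUnit_intCast_iff {n : ℕ} (a : ℤ) : IsUnit (a : ZMod n) ↔ IsCoprime a (n : ℤ) := by
  constructor
  · rintro ⟨u, hu⟩
    obtain ⟨b, hb⟩ := ZMod.intCast_surjective (↑u⁻¹ : ZMod n)
    have h : ((a * b - 1 : ℤ) : ZMod n) = 0 := by
      push_cast; rw [← hu, hb]; simp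
    rw [ZMod.intCast_zmod_eq_zero_iff_dvd] at h
    obtain ⟨c, hc⟩ := h
    exact ⟨b, -c, by linear_combination hc⟩
  · rintro ⟨b, c, h⟩
    refine IsUnit.of_mul_eq_one (b : ZMod n) ?_
    have := congrArg (Int.cast : ℤ → ZMod n) h
    push_cast at this
    rw [ZMod.natCast_self, mul_zero, add_zero] at this
    rw [mul_comm]; exact this

theorem norm_eq (v : GaussianInt) : v.norm = v.re ^ 2 + v.im ^ 2 := by
  rw [Zsqrtd.norm_def]; ring

theorem weight_congr {n : ℕ} [NeZero n] {v w : GaussianInt}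
    (hre : (v.re : ZMod n) = w.re) (him : (v.im : ZMod n) = w.im) : weight n v = weight n w := by
  have h : cross n v = cross n w := by
    funext u
    simp only [cross, hre, him]
  simp only [weight, h]

theorem weight_mul_of_isCoprime {n : ℕ} [NeZero n] (v : GaussianInt) {g : GaussianInt}
    (hg : IsCoprime g.norm (n : ℤ)) : weight n (v * g) = weight n v := by
  obtain ⟨e, he⟩ := (isUnit_intCast_iff g.norm).2 hg
  rw [norm_eq] at he
  push_cast at he
  have hinv : (↑e⁻¹ : ZMod n) * ((g.re : ZMod n) ^ 2 + (g.im : ZMod n) ^ 2) = 1 := by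
    rw [← he]; simp
  set i : ZMod n := ↑e⁻¹
  have hi : IsUnit i := Units.isUnit _
  symm
  refine Finset.card_nbij'
    (fun u => (u.1 * g.re - u.2 * g.im, u.1 * g.im + u.2 * g.re))
    (fun u => (i * (u.1 * g.re + u.2 * g.im), i * (u.2 * g.re - u.1 * g.im))) ?_ ?_ ?_ ?_
  · intro u hu
    rw [Finset.mem_coe, Finset.mem_filter, mem_gaussUnits] at hu ⊢
    simp only [cross, Zsqrtd.re_mul, Zsqrtd.im_mul] at hu ⊢
    push_cast
    constructor
    · have : (u.1 * g.re - u.2 * g.im) ^ 2 + (u.1 * g.im + u.2 * g.re) ^ 2 =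
        (u.1 ^ 2 + u.2 ^ 2) * (e : ZMod n) := by rw [he]; ring
      rw [this]
      exact hu.1.mul (Units.isUnit e)
    · linear_combination ((g.re : ZMod n) ^ 2 + (g.im : ZMod n) ^ 2) * hu.2
  · intro u hu
    rw [Finset.mem_coe, Finset.mem_filter, mem_gaussUnits] at hu ⊢
    simp only [cross, Zsqrtd.re_mul, Zsqrtd.im_mul] at hu ⊢
    push_cast at hu
    constructor
    · have : (i * (u.1 * g.re + u.2 * g.im)) ^ 2 + (i * (u.2 * g.re - u.1 * g.im)) ^ 2 =
        (u.1 ^ 2 + u.2 ^ 2) * i := by linear_combination (u.1 ^ 2 + u.2 ^ 2) * i * hinv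
      rw [this]
      exact hu.1.mul hi
    · linear_combination i * hu.2
  · intro u _
    refine Prod.ext ?_ ?_
    · linear_combination u.1 * hinv
    · linear_combination u.2 * hinv
  · intro u _
    refine Prod.ext ?_ ?_
    · linear_combination u.1 * hinv
    · linear_combination u.2 * hinv

theorem isCoprime_intCast_of_forall_prime {a : ℤ} {m : ℕ}
    (h : ∀ p : ℕ, p.Prime → p ∣ m → ¬ (p : ℤ) ∣ a) : IsCoprime a (m : ℤ) := by
  rw [Int.isCoprime_iff_gcd_eq_one]
  by_contra hne
  obtain ⟨p, hp, hd⟩ := Nat.exists_prime_and_dvd hne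
  refine h p hp ?_ (Int.natCast_dvd_natCast.2 hd |>.trans (Int.gcd_dvd_left _ _))
  exact Int.natCast_dvd_natCast.1 ((Int.natCast_dvd_natCast.2 hd).trans (Int.gcd_dvd_right _ _))

theorem not_dvd_of_isCoprime {a : ℤ} {m p : ℕ} (hp : p.Prime) (hm : p ∣ m)
    (h : IsCoprime a (m : ℤ)) : ¬ (p : ℤ) ∣ a := fun hd => by
  have := h.isUnit_of_dvd' hd (Int.natCast_dvd_natCast.2 hm)
  rw [Int.isUnit_iff_natAbs_eq, Int.natAbs_natCast] at this
  exact hp.one_lt.ne' this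

/-- A Gaussian integer invertible modulo `m` lifts to one invertible modulo `n`. -/
theorem exists_isCoprime_lift {n m : ℕ} (hn : n ≠ 0) {w : GaussianInt}
    (hw : IsCoprime w.norm (m : ℤ)) :
    ∃ g z : GaussianInt, g = w + m * z ∧ IsCoprime g.norm (n : ℤ) := by
  classical
  set k : ℕ := ∏ p ∈ n.primeFactors.filter (fun p => ¬ p ∣ m), p with hk
  have hcop : IsCoprime (m : ℤ) (k : ℤ) := by
    rw [Nat.isCoprime_iff_coprime]
    refine Nat.Coprime.prod_right fun p hp => ?_
    rw [Finset.mem_filter] at hp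
    exact ((Nat.Prime.coprime_iff_not_dvd (Nat.prime_of_mem_primeFactors hp.1)).2 hp.2).symm
  obtain ⟨a, b, hab⟩ := hcop
  have hb : (b : ℤ) * k = 1 - a * m := by linear_combination hab
  refine ⟨w + m * (a * (1 - w)), a * (1 - w), rfl, ?_⟩
  set g := w + (m : GaussianInt) * (a * (1 - w)) with hg
  have h1 : g.re = w.re + m * (a * (1 - w.re)) := by simp [hg, Zsqrtd.re_mul, Zsqrtd.im_mul]
  have h2 : g.im = w.im - m * (a * w.im) := by
    simp [hg, Zsqrtd.re_mul, Zsqrtd.im_mul]; ring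
  refine isCoprime_intCast_of_forall_prime fun p hp hpn hdvd => ?_
  by_cases hpm : p ∣ m
  · refine not_dvd_of_isCoprime hp hpm hw ?_
    have hpm' : (p : ℤ) ∣ m := Int.natCast_dvd_natCast.2 hpm
    have : w.norm = g.norm - m * (2 * w.re * (a * (1 - w.re)) + m * (a * (1 - w.re)) ^ 2
        - 2 * w.im * (a * w.im) + m * (a * w.im) ^ 2) := by
      rw [norm_eq, norm_eq, h1, h2]; ring
    rw [this]
    exact dvd_sub hdvd (hpm'.mul_right _)
  · have hpk : (p : ℤ) ∣ k := Int.natCast_dvd_natCast.2 (Finset.dvd_prod_of_mem _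
      (Finset.mem_filter.2 ⟨Nat.mem_primeFactors.2 ⟨hp, hpn, hn⟩, hpm⟩))
    have hg1 : g.re = 1 + k * (b * (w.re - 1)) := by
      rw [h1]; linear_combination (1 - w.re) * hab
    have hg2 : g.im = k * (b * w.im) := by
      rw [h2]; linear_combination (-w.im) * hab
    have : (1 : ℤ) = g.norm - k * (2 * (b * (w.re - 1)) + k * (b * (w.re - 1)) ^ 2 +
        k * (b * w.im) ^ 2) := by
      rw [norm_eq, hg1, hg2]; ring
    have h3 : (p : ℤ) ∣ 1 := by
      rw [this]; exact dvd_sub hdvd (hpk.mul_right _)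
    exact hp.one_lt.ne' (Nat.dvd_one.1 (by exact_mod_cast h3))

theorem weight_natCast_mul {n d m : ℕ} [NeZero n] (hn : n = d * m) {w : GaussianInt}
    (hw : IsCoprime w.norm (m : ℤ)) : weight n (d * w) = weight n d := by
  obtain ⟨g, z, hg, hgc⟩ := exists_isCoprime_lift (NeZero.ne n) hw
  rw [← weight_mul_of_isCoprime (d : GaussianInt) hgc]
  have h0 : ((d : ZMod n) * m) = 0 := by
    rw [← Nat.cast_mul, ← hn, ZMod.natCast_self]
  apply weight_congr
  · simp [hg, Zsqrtd.re_mul, Zsqrtd.im_mul]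
    linear_combination -z.re * h0
  · simp [hg, Zsqrtd.re_mul, Zsqrtd.im_mul]
    linear_combination -z.im * h0

theorem weight_natCast_le {n d m : ℕ} [NeZero n] (hn : n = d * m) : weight n d ≤ n * d := by
  have hm : 0 < m := Nat.pos_of_ne_zero fun h => NeZero.ne n (by rw [hn, h, mul_zero])
  calc weight n d
      ≤ ((Finset.univ : Finset (ZMod n)) ×ˢ
          ((Finset.range d).image fun j => ((m * j : ℕ) : ZMod n))).card := by
        refine Finset.card_le_card fun u hu => ?_
        rw [Finset.mem_filter] at hu
        simp only [cross] at hu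
        have h : ((d * u.2.val : ℕ) : ZMod n) = 0 := by
          have := hu.2
          simp at this
          simpa using this
        rw [ZMod.natCast_eq_zero_iff] at h
        have h' : d * m ∣ d * u.2.val := (dvd_of_eq hn.symm).trans h
        have hd : 0 < d := Nat.pos_of_ne_zero fun h => NeZero.ne n (by rw [hn, h, zero_mul])
        obtain ⟨j, hj⟩ := Nat.dvd_of_mul_dvd_mul_left hd h'
        refine Finset.mem_product.2 ⟨Finset.mem_univ _, Finset.mem_image.2 ⟨j, ?_, ?_⟩⟩
        · have h1 := ZMod.val_lt u.2
          rw [hj] at h1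
          rw [Finset.mem_range]
          by_contra hle
          rw [not_lt] at hle
          have : n ≤ m * j := by
            calc n = m * d := by rw [hn, mul_comm]
              _ ≤ m * j := Nat.mul_le_mul_left _ hle
          omega
        · rw [← hj, ZMod.natCast_zmod_val]
    _ ≤ n * d := by
        rw [Finset.card_product, Finset.card_univ, ZMod.card]
        exact Nat.mul_le_mul_left _ (Finset.card_image_le.trans (Finset.card_range d).le)

theorem isCoprime_norm_of_weight_ne_zero {n d m : ℕ} [NeZero n] (hn : n = d * m) {w : GaussianInt}
    (hw : ∀ p : ℕ, p.Prime → p ∣ m → (p : ℤ) ∣ w.re → ¬ (p : ℤ) ∣ w.im)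
    (h : weight n (d * w) ≠ 0) : IsCoprime w.norm (m : ℤ) := by
  obtain ⟨u, hu⟩ := Finset.card_ne_zero.1 h
  rw [Finset.mem_filter, mem_gaussUnits] at hu
  obtain ⟨hunit, hcross⟩ := hu
  obtain ⟨x, hx⟩ := ZMod.intCast_surjective u.1
  obtain ⟨y, hy⟩ := ZMod.intCast_surjective u.2
  have hd0 : (d : ℤ) ≠ 0 := Nat.cast_ne_zero.2 fun h => NeZero.ne n (by rw [hn, h, zero_mul])
  have hcop : IsCoprime (x ^ 2 + y ^ 2) (n : ℤ) := by
    rw [← isUnit_intCast_iff]; push_cast; rwa [hx, hy]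
  have hc : (m : ℤ) ∣ w.im * x - w.re * y := by
    have : ((d * (w.im * x - w.re * y) : ℤ) : ZMod n) = 0 := by
      rw [← hcross, cross]
      push_cast
      rw [hx, hy]
      simp
      ring
    rw [ZMod.intCast_zmod_eq_zero_iff_dvd, hn, Nat.cast_mul] at this
    exact Int.dvd_of_mul_dvd_mul_left hd0 this
  refine isCoprime_intCast_of_forall_prime fun p hp hpm hdvd => ?_
  have hpm' : (p : ℤ) ∣ m := Int.natCast_dvd_natCast.2 hpm
  have hpp : Prime (p : ℤ) := Nat.prime_iff_prime_int.1 hp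
  have hpc := hpm'.trans hc
  have hpN : ¬ (p : ℤ) ∣ x ^ 2 + y ^ 2 :=
    not_dvd_of_isCoprime hp (hpm.trans (hn ▸ dvd_mul_left m d)) hcop
  rw [norm_eq] at hdvd
  have ht : (p : ℤ) ∣ w.re * x + w.im * y := by
    refine hpp.dvd_of_dvd_pow (n := 2) ?_
    have : (w.re * x + w.im * y) ^ 2 = (w.re ^ 2 + w.im ^ 2) * (x ^ 2 + y ^ 2) -
      (w.im * x - w.re * y) * (w.im * x - w.re * y) := by ring
    rw [this]
    exact dvd_sub (hdvd.mul_right _) (hpc.mul_right _)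
  refine hw p hp hpm ?_ ?_
  · refine (hpp.dvd_or_dvd ?_).resolve_right hpN
    have : w.re * (x ^ 2 + y ^ 2) = (w.re * x + w.im * y) * x - (w.im * x - w.re * y) * y := by ring
    rw [this]
    exact dvd_sub (ht.mul_right _) (hpc.mul_right _)
  · refine (hpp.dvd_or_dvd ?_).resolve_right hpN
    have : w.im * (x ^ 2 + y ^ 2) = (w.re * x + w.im * y) * y + (w.im * x - w.re * y) * x := by ring
    rw [this]
    exact dvd_add (ht.mul_right _) (hpc.mul_right _)

/-- The number of pairs of an invertible residue and a nonzero vector of norm at most `X` in its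
lattice. -/
noncomputable def latticeCount (n : ℕ) [NeZero n] (X : ℝ) : ℕ := ∑ v ∈ disc X, weight n v

theorem isCoprime_norm_iff {m : ℕ} (hm : m ≠ 0) (w : GaussianInt) :
    IsCoprime w.norm (m : ℤ) ↔ ∀ p ∈ primeSet m, ¬ p ∣ w := by
  obtain ⟨h1, -, h3, h4, -⟩ := primeSet_spec hm
  have hstar : ∀ a b : GaussianInt, a ∣ b → star a ∣ star b := by
    rintro a _ ⟨c, rfl⟩
    exact ⟨star c, by rw [star_mul, mul_comm]⟩
  constructor
  · rintro ⟨a, b, hab⟩ p hp hpw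
    refine (h1 p hp).not_isUnit (isUnit_of_dvd_one ?_)
    have h := congrArg (Int.cast : ℤ → GaussianInt) hab
    push_cast at h
    rw [← h, Zsqrtd.norm_eq_mul_conj]
    exact dvd_add ((hpw.mul_right _).mul_left _) ((h3 p hp).mul_left _)
  · intro h
    refine isCoprime_intCast_of_forall_prime fun p hp hpm hdvd => ?_
    have hnu : ¬ IsUnit (p : GaussianInt) := fun hu => by
      have := (Zsqrtd.norm_eq_one_iff' (by norm_num) _).2 hu
      rw [Zsqrtd.norm_natCast] at this
      exact hp.one_lt.ne' (Nat.eq_one_of_mul_eq_one_right (by exact_mod_cast this))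
    obtain ⟨q, hq, hqp⟩ := WfDvdMonoid.exists_irreducible_factor hnu
      (Nat.cast_ne_zero.2 hp.ne_zero)
    have hqm : q ∣ (m : GaussianInt) := hqp.trans (Nat.cast_dvd_cast hpm)
    have hqN : q ∣ w * star w := by
      rw [← Zsqrtd.norm_eq_mul_conj]
      refine hqp.trans ?_
      have := (Zsqrtd.intCast_dvd_intCast (d := -1) (p : ℤ) w.norm).2 hdvd
      simpa using this
    rcases hq.prime.dvd_or_dvd hqN with hd | hd
    · obtain ⟨r, hr, ha⟩ := h4 q hq.prime hqm
      exact h r hr (ha.dvd_iff_dvd_left.1 hd)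
    · have hd' := hstar _ _ hd
      rw [star_star] at hd'
      have hpr : Prime (star q) := by
        have := (MulEquiv.prime_iff (starMulAut (R := GaussianInt))).2 hq.prime
        exact this
      have hqm' := hstar _ _ hqm
      rw [star_natCast] at hqm'
      obtain ⟨r, hr, ha⟩ := h4 (star q) hpr hqm'
      exact h r hr (ha.dvd_iff_dvd_left.1 hd')

theorem latticeCount_eq (n : ℕ) [NeZero n] (X : ℝ) :
    latticeCount n X =
      ∑ d ∈ n.divisors, weight n d * (sieved (primeSet (n / d)) (X / (d : ℝ) ^ 2)).card := by
  classical
  rw [latticeCount, ← Finset.sum_fiberwise_of_maps_to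
    (g := fun v : GaussianInt => Nat.gcd (Int.gcd v.re v.im) n) (t := n.divisors)
    (fun v _ => Nat.mem_divisors.2 ⟨Nat.gcd_dvd_right _ _, NeZero.ne n⟩)]
  refine Finset.sum_congr rfl fun d hd => ?_
  have hdn := Nat.dvd_of_mem_divisors hd
  have hnd : n = d * (n / d) := (Nat.mul_div_cancel' hdn).symm
  set m := n / d with hm
  have hm0 : m ≠ 0 := fun h => NeZero.ne n (by rw [hnd, h, mul_zero])
  have hd0 : d ≠ 0 := fun h => NeZero.ne n (by rw [hnd, h, zero_mul])
  have hdG : (d : GaussianInt) ≠ 0 := Nat.cast_ne_zero.2 hd0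
  have hinj : Function.Injective fun w : GaussianInt => (d : GaussianInt) * w :=
    fun x y h => mul_left_cancel₀ hdG h
  have hre : ∀ w : GaussianInt, ((d : GaussianInt) * w).re = d * w.re := fun w => by
    simp [Zsqrtd.re_mul]
  have him : ∀ w : GaussianInt, ((d : GaussianInt) * w).im = d * w.im := fun w => by
    simp [Zsqrtd.im_mul]
  have hdisc : ∀ w : GaussianInt, (d : GaussianInt) * w ∈ disc X ↔ w ∈ disc (X / (d : ℝ) ^ 2) := by
    intro w
    rw [mem_disc, mem_disc, le_div_iff₀ (by positivity), Zsqrtd.norm_mul, Zsqrtd.norm_natCast]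
    simp only [ne_eq, mul_eq_zero, hdG, false_or]
    push_cast
    rw [mul_comm, sq]
  have hgcd : ∀ w : GaussianInt, Nat.gcd (Int.gcd ((d : GaussianInt) * w).re
      ((d : GaussianInt) * w).im) n = d * Nat.gcd (Int.gcd w.re w.im) m := by
    intro w
    rw [hre, him, Int.gcd_mul_left, Int.natAbs_natCast]
    conv_lhs => rw [hnd]
    rw [Nat.gcd_mul_left]
  rw [← Finset.sum_subset (s₁ := (sieved (primeSet m) (X / (d : ℝ) ^ 2)).image
    fun w => (d : GaussianInt) * w), Finset.sum_image fun x _ y _ h => hinj h,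
    Finset.sum_congr rfl (g := fun _ => weight n d), Finset.sum_const, smul_eq_mul, mul_comm]
  · intro w hw
    exact weight_natCast_mul hnd ((isCoprime_norm_iff hm0 w).2 (mem_sieved.1 hw).2)
  · intro v hv
    obtain ⟨w, hw, rfl⟩ := Finset.mem_image.1 hv
    rw [mem_sieved, ← mem_disc, ← hdisc] at hw
    refine Finset.mem_filter.2 ⟨hw.1, ?_⟩
    rw [hgcd]
    have hc := (isCoprime_norm_iff hm0 w).2 hw.2
    suffices Nat.gcd (Int.gcd w.re w.im) m = 1 by rw [this, mul_one]
    by_contra hne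
    obtain ⟨p, hp, hpd⟩ := Nat.exists_prime_and_dvd hne
    refine not_dvd_of_isCoprime hp (hpd.trans (Nat.gcd_dvd_right _ _)) hc ?_
    have hpg : (p : ℤ) ∣ (Int.gcd w.re w.im : ℤ) :=
      Int.natCast_dvd_natCast.2 (hpd.trans (Nat.gcd_dvd_left _ _))
    rw [norm_eq, sq, sq]
    exact dvd_add ((hpg.trans (Int.gcd_dvd_left _ _)).mul_right _)
      ((hpg.trans (Int.gcd_dvd_right _ _)).mul_right _)
  · intro v hv hv'
    rw [Finset.mem_filter] at hv
    obtain ⟨hv, hg⟩ := hv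
    have hdg : (d : ℤ) ∣ (Int.gcd v.re v.im : ℤ) :=
      Int.natCast_dvd_natCast.2 (hg ▸ Nat.gcd_dvd_left _ _)
    obtain ⟨w, rfl⟩ : (d : GaussianInt) ∣ v := by
      have := (Zsqrtd.intCast_dvd (d := -1) (d : ℤ) v).2
        ⟨hdg.trans (Int.gcd_dvd_left _ _), hdg.trans (Int.gcd_dvd_right _ _)⟩
      simpa using this
    by_contra hne
    rw [hgcd] at hg
    have hg1 : Nat.gcd (Int.gcd w.re w.im) m = 1 :=
      Nat.eq_of_mul_eq_mul_left (Nat.pos_of_ne_zero hd0) (hg.trans (mul_one d).symm)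
    refine hv' (Finset.mem_image.2 ⟨w, mem_sieved.2 ⟨mem_disc.1 ((hdisc w).1 hv), ?_⟩, rfl⟩)
    refine (isCoprime_norm_iff hm0 w).1 (isCoprime_norm_of_weight_ne_zero hnd ?_ hne)
    intro p hp hpm h1 h2
    have := Nat.dvd_gcd (Int.natCast_dvd_natCast.1 (Int.dvd_coe_gcd h1 h2)) hpm
    rw [hg1, Nat.dvd_one] at this
    exact hp.one_lt.ne' this

open Filter in
theorem tendsto_div_of_abs_sub_le {f : ℝ → ℝ} {K C : ℝ}
    (h : ∀ X : ℝ, 1 ≤ X → |f X - K * X| ≤ C * √X) :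
    Tendsto (fun X => f X / X) atTop (nhds K) := by
  rw [tendsto_iff_norm_sub_tendsto_zero]
  refine squeeze_zero' (Eventually.of_forall fun _ => norm_nonneg _) (g := fun X => C / √X) ?_
    (Real.tendsto_sqrt_atTop.const_div_atTop C)
  filter_upwards [eventually_ge_atTop 1] with X hX
  have hX0 : 0 < X := by linarith
  have hs : 0 < √X := Real.sqrt_pos.2 hX0
  have : f X / X - K = (f X - K * X) / X := by field_simp
  rw [Real.norm_eq_abs, this, abs_div, abs_of_pos hX0, div_le_div_iff₀ hX0 hs]
  calc |f X - K * X| * √X ≤ C * √X * √X := by gcongr; exact h X hX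
    _ = C * X := by rw [mul_assoc, Real.mul_self_sqrt hX0.le]

open scoped Classical in
/-- The number of nonzero Gaussian integers of norm at most `X` in a residue class modulo `n`. -/
noncomputable def residueCount (n : ℕ) (r : ZMod n × ZMod n) (X : ℝ) : ℕ :=
  ((disc X).filter fun v => ((v.re : ZMod n), (v.im : ZMod n)) = r).card

theorem abs_residueCount_sub_le (n : ℕ) [NeZero n] (r : ZMod n × ZMod n) {X : ℝ} (hX : 1 ≤ X) :
    |(residueCount n r X : ℝ) - Real.pi / (n : ℝ) ^ 2 * X| ≤ (1 + 8 * Real.pi) * √X := by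
  classical
  have hn : (0 : ℝ) < n := Nat.cast_pos.2 (NeZero.pos n)
  have hn1 : (1 : ℝ) ≤ n := Nat.one_le_cast.2 (NeZero.pos n)
  have hnG : (n : GaussianInt) ≠ 0 := Nat.cast_ne_zero.2 (NeZero.ne n)
  have hnC : (n : ℂ) ≠ 0 := Nat.cast_ne_zero.2 (NeZero.ne n)
  obtain ⟨x, hx⟩ := ZMod.intCast_surjective r.1
  obtain ⟨y, hy⟩ := ZMod.intCast_surjective r.2
  set r₀ : GaussianInt := ⟨x, y⟩ with hr₀
  set c : ℂ := -((r₀ : ℂ) / n) with hc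
  have hρ : 0 ≤ √X / n := by positivity
  have hfin := finite_norm_sub_le c (√X / n)
  set F : GaussianInt → GaussianInt := fun w => r₀ + n * w
  have hF : Function.Injective F := fun a b h => mul_left_cancel₀ hnG (add_left_cancel h)
  have hmem : ∀ w : GaussianInt, ‖(w : ℂ) - c‖ ≤ √X / n ↔ ((F w).norm : ℝ) ≤ X := by
    intro w
    have h1 : ((F w : GaussianInt) : ℂ) = n * ((w : ℂ) - c) := by
      simp only [F, hc, map_add, map_mul, map_natCast]
      field_simp
      ring
    rw [norm_cast_eq_sq, h1, norm_mul, Complex.norm_natCast, le_div_iff₀ hn, mul_comm]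
    rw [← Real.le_sqrt (by positivity) (by linarith)]
  have himg : (disc X).filter (fun v => ((v.re : ZMod n), (v.im : ZMod n)) = r) =
      (hfin.toFinset.image F).erase 0 := by
    ext v
    rw [Finset.mem_filter, mem_disc, Finset.mem_erase, Finset.mem_image, and_assoc]
    refine and_congr_right fun _ => ?_
    constructor
    · rintro ⟨hv, h⟩
      rw [Prod.ext_iff, ← hx, ← hy] at h
      obtain ⟨h1, h2⟩ := h
      have h1 := (ZMod.intCast_eq_intCast_iff_dvd_sub _ _ _).1 h1.symm
      have h2 := (ZMod.intCast_eq_intCast_iff_dvd_sub _ _ _).1 h2.symm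
      obtain ⟨a, ha⟩ := h1
      obtain ⟨b, hb⟩ := h2
      have hvF : F ⟨a, b⟩ = v := by
        refine Zsqrtd.ext ?_ ?_
        · simp [F, hr₀]; linarith
        · simp [F, hr₀]; linarith
      refine ⟨⟨a, b⟩, ?_, hvF⟩
      rw [Set.Finite.mem_toFinset, Set.mem_ofPred_eq, hmem, hvF]
      exact hv
    · rintro ⟨w, hw, rfl⟩
      rw [Set.Finite.mem_toFinset, Set.mem_ofPred_eq, hmem] at hw
      refine ⟨hw, Prod.ext ?_ ?_⟩
      · simp [F, hr₀, Zsqrtd.re_mul, hx]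
      · simp [F, hr₀, Zsqrtd.im_mul, hy]
  have hcard : ({w : GaussianInt | ‖(w : ℂ) - c‖ ≤ √X / n}.ncard : ℝ) =
      (hfin.toFinset.image F).card := by
    rw [Finset.card_image_of_injective _ hF, Set.ncard_eq_toFinset_card _ hfin]
  have h1 : (residueCount n r X : ℝ) ≤ (hfin.toFinset.image F).card := by
    rw [residueCount, himg]
    exact_mod_cast Finset.card_erase_le
  have h2 : ((hfin.toFinset.image F).card : ℝ) ≤ residueCount n r X + 1 := by
    rw [residueCount, himg]
    have := Finset.pred_card_le_card_erase (s := hfin.toFinset.image F) (a := (0 : GaussianInt))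
    have h3 : (hfin.toFinset.image F).card ≤ ((hfin.toFinset.image F).erase 0).card + 1 := by omega
    exact_mod_cast h3
  have h3 := abs_ncard_sub_le c hρ
  rw [hcard, div_pow, Real.sq_sqrt (by linarith)] at h3
  have h4 : Real.pi * (X / (n : ℝ) ^ 2) = Real.pi / (n : ℝ) ^ 2 * X := by ring
  rw [h4] at h3
  have hs1 : 1 ≤ √X := Real.one_le_sqrt.2 hX
  have h5 : √X / n ≤ √X := div_le_self (by linarith) hn1
  have hpi := Real.pi_pos
  rw [abs_le] at h3 ⊢
  have h6 : 4 * Real.pi * (√X / n + 1) ≤ 8 * Real.pi * √X := by nlinarith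
  constructor <;> nlinarith

theorem tendsto_residueCount (n : ℕ) [NeZero n] (r : ZMod n × ZMod n) :
    Filter.Tendsto (fun X => (residueCount n r X : ℝ) / X) Filter.atTop
      (nhds (Real.pi / (n : ℝ) ^ 2)) :=
  tendsto_div_of_abs_sub_le fun _ hX => abs_residueCount_sub_le n r hX

/-- The number of nonzero vectors of norm at most `X` in the lattice of `u`. -/
noncomputable def lineCount (n : ℕ) (u : ZMod n × ZMod n) (X : ℝ) : ℕ :=
  ((disc X).filter fun v => cross n v u = 0).card

theorem lineCount_eq {n : ℕ} [NeZero n] {u : ZMod n × ZMod n} (hu : u ∈ gaussUnits n) (X : ℝ) :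
    lineCount n u X = ∑ t : ZMod n, residueCount n (t * u.1, t * u.2) X := by
  classical
  obtain ⟨e, he⟩ := mem_gaussUnits.1 hu
  have hinv : (↑e⁻¹ : ZMod n) * (u.1 ^ 2 + u.2 ^ 2) = 1 := by
    rw [← he]; simp
  rw [lineCount, Finset.card_eq_sum_card_fiberwise (t := Finset.univ)
    (f := fun v : GaussianInt => (↑e⁻¹ : ZMod n) * (v.re * u.1 + v.im * u.2))
    (fun _ _ => Finset.mem_coe.2 (Finset.mem_univ _))]
  refine Finset.sum_congr rfl fun t _ => ?_
  rw [residueCount, Finset.filter_filter]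
  congr 1
  refine Finset.filter_congr fun v _ => ?_
  rw [cross, Prod.mk.injEq]
  constructor
  · rintro ⟨h, rfl⟩
    constructor
    · linear_combination -(v.re : ZMod n) * hinv + (↑e⁻¹ : ZMod n) * (-u.2) * h
    · linear_combination -(v.im : ZMod n) * hinv + (↑e⁻¹ : ZMod n) * u.1 * h
  · rintro ⟨h1, h2⟩
    rw [h1, h2]
    exact ⟨by ring, by linear_combination t * hinv⟩

theorem latticeCount_eq_sum_lineCount (n : ℕ) [NeZero n] (X : ℝ) :
    latticeCount n X = ∑ u ∈ gaussUnits n, lineCount n u X := by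
  simp only [latticeCount, lineCount, weight]
  exact Finset.sum_card_bipartiteAbove_eq_sum_card_bipartiteBelow (fun v u => cross n v u = 0)

theorem tendsto_latticeCount (n : ℕ) [NeZero n] :
    Filter.Tendsto (fun X => (latticeCount n X : ℝ) / X) Filter.atTop
      (nhds (Real.pi * (gaussUnits n).card / n)) := by
  have hn : (n : ℝ) ≠ 0 := Nat.cast_ne_zero.2 (NeZero.ne n)
  have h : ∀ X : ℝ, (latticeCount n X : ℝ) / X =
      ∑ u ∈ gaussUnits n, ∑ t : ZMod n, (residueCount n (t * u.1, t * u.2) X : ℝ) / X := by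
    intro X
    rw [latticeCount_eq_sum_lineCount, Nat.cast_sum, Finset.sum_div]
    refine Finset.sum_congr rfl fun u hu => ?_
    rw [lineCount_eq hu, Nat.cast_sum, Finset.sum_div]
  simp only [h]
  have := tendsto_finsetSum (gaussUnits n) fun u _ => tendsto_finsetSum Finset.univ
    fun (t : ZMod n) _ => tendsto_residueCount n (t * u.1, t * u.2)
  convert this using 2
  rw [Finset.sum_const, Finset.sum_const, Finset.card_univ, ZMod.card, nsmul_eq_mul, nsmul_eq_mul]
  field_simp

theorem abs_latticeCount_sub_le (n : ℕ) [NeZero n] {X : ℝ} (hX : 0 ≤ X) :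
    |(latticeCount n X : ℝ) - Real.pi * (gaussUnits n).card / n * X| ≤
      (8 * Real.pi + 1) * n * n.divisors.card * 2 ^ (primeSet n).card * √X := by
  have hpi := Real.pi_pos
  set K : ℝ := ∑ d ∈ n.divisors, weight n d *
    (Real.pi * (1 / (d : ℝ) ^ 2) * ∏ p ∈ primeSet (n / d), (1 - 1 / (p.norm : ℝ))) with hK
  have key : ∀ X : ℝ, 0 ≤ X → |(latticeCount n X : ℝ) - K * X| ≤
      (8 * Real.pi + 1) * n * n.divisors.card * 2 ^ (primeSet n).card * √X := by
    intro X hX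
    rw [latticeCount_eq, hK, Finset.sum_mul, Nat.cast_sum, ← Finset.sum_sub_distrib]
    refine (Finset.abs_sum_le_sum_abs _ _).trans ?_
    have hterm : ∀ d ∈ n.divisors,
        |((weight n d * (sieved (primeSet (n / d)) (X / (d : ℝ) ^ 2)).card : ℕ) : ℝ) -
          weight n d * (Real.pi * (1 / (d : ℝ) ^ 2) *
            ∏ p ∈ primeSet (n / d), (1 - 1 / (p.norm : ℝ))) * X| ≤
        (8 * Real.pi + 1) * n * 2 ^ (primeSet n).card * √X := by
      intro d hd
      have hdn := Nat.dvd_of_mem_divisors hd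
      have hnd : n = d * (n / d) := (Nat.mul_div_cancel' hdn).symm
      have hd0 : 0 < d := Nat.pos_of_mem_divisors hd
      have hdR : (0 : ℝ) < d := Nat.cast_pos.2 hd0
      have hm0 : n / d ≠ 0 := fun h => NeZero.ne n (by rw [hnd, h, mul_zero])
      obtain ⟨h1, h2, -⟩ := primeSet_spec hm0
      have hs := abs_card_sieved_sub_le _ h1 h2 (X := X / (d : ℝ) ^ 2) (by positivity)
      have hw : (weight n d : ℝ) ≤ n * d := by exact_mod_cast weight_natCast_le hnd
      have hc := card_primeSet_le_of_dvd (NeZero.ne n) (Nat.div_dvd_of_dvd hdn)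
      rw [Real.sqrt_div hX, Real.sqrt_sq hdR.le] at hs
      have : ((weight n d * (sieved (primeSet (n / d)) (X / (d : ℝ) ^ 2)).card : ℕ) : ℝ) -
          weight n d * (Real.pi * (1 / (d : ℝ) ^ 2) *
            ∏ p ∈ primeSet (n / d), (1 - 1 / (p.norm : ℝ))) * X =
          weight n d * ((sieved (primeSet (n / d)) (X / (d : ℝ) ^ 2)).card -
            Real.pi * (X / (d : ℝ) ^ 2) * ∏ p ∈ primeSet (n / d), (1 - 1 / (p.norm : ℝ))) := by
        push_cast; ring
      rw [this, abs_mul, Nat.abs_cast]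
      calc (weight n d : ℝ) * |((sieved (primeSet (n / d)) (X / (d : ℝ) ^ 2)).card : ℝ) -
            Real.pi * (X / (d : ℝ) ^ 2) * ∏ p ∈ primeSet (n / d), (1 - 1 / (p.norm : ℝ))|
          ≤ (n * d) * (2 ^ (primeSet n).card * ((8 * Real.pi + 1) * (√X / d))) := by
            refine mul_le_mul hw (hs.trans ?_) (abs_nonneg _) (by positivity)
            gcongr
            norm_num
        _ = _ := by field_simp
    refine (Finset.sum_le_card_nsmul _ _ _ hterm).trans (le_of_eq ?_)
    rw [nsmul_eq_mul]; ring
  have hlim := tendsto_div_of_abs_sub_le fun X (hX : (1 : ℝ) ≤ X) => key X (by linarith)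
  rw [tendsto_nhds_unique (tendsto_latticeCount n) hlim]
  exact key X hX

theorem sq_le_card_gaussUnits_mul (n : ℕ) [NeZero n] :
    (n : ℝ) ^ 2 ≤ (gaussUnits n).card * 2 ^ (primeSet n).card := by
  classical
  have hn : (0 : ℝ) < n := Nat.cast_pos.2 (NeZero.pos n)
  have hpi := Real.pi_pos
  obtain ⟨h1, h2, -⟩ := primeSet_spec (NeZero.ne n)
  have hsieve : ∀ X : ℝ, (sieved (primeSet n) X).card =
      ∑ u ∈ gaussUnits n, residueCount n u X := by
    intro X
    rw [Finset.card_eq_sum_card_fiberwise (t := gaussUnits n)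
      (f := fun v : GaussianInt => ((v.re : ZMod n), (v.im : ZMod n)))]
    · refine Finset.sum_congr rfl fun u hu => ?_
      rw [residueCount, sieved, Finset.filter_filter]
      congr 1
      refine Finset.filter_congr fun v _ => ?_
      rw [and_iff_right_iff_imp]
      rintro rfl
      rw [← isCoprime_norm_iff (NeZero.ne n), ← isUnit_intCast_iff, norm_eq]
      push_cast
      exact mem_gaussUnits.1 hu
    · intro v hv
      rw [Finset.mem_coe, mem_sieved, ← isCoprime_norm_iff (NeZero.ne n), ← isUnit_intCast_iff,
        norm_eq] at hv
      rw [Finset.mem_coe, mem_gaussUnits]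
      have h := hv.2
      push_cast at h
      exact h
  have hlim1 : Filter.Tendsto (fun X => ((sieved (primeSet n) X).card : ℝ) / X) Filter.atTop
      (nhds ((gaussUnits n).card * (Real.pi / (n : ℝ) ^ 2))) := by
    have := tendsto_finsetSum (gaussUnits n) fun u _ => tendsto_residueCount n u
    rw [Finset.sum_const, nsmul_eq_mul] at this
    refine this.congr fun X => ?_
    rw [hsieve, Nat.cast_sum, Finset.sum_div]
  have hlim2 := tendsto_div_of_abs_sub_le (f := fun X => ((sieved (primeSet n) X).card : ℝ))
    (K := Real.pi * ∏ p ∈ primeSet n, (1 - 1 / (p.norm : ℝ)))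
    (C := 2 ^ (primeSet n).card * (8 * Real.pi + 1)) fun X hX => by
      have := abs_card_sieved_sub_le _ h1 h2 (X := X) (by linarith)
      rw [mul_assoc (2 ^ _ : ℝ)]
      convert this using 3
      ring
  have heq := tendsto_nhds_unique hlim1 hlim2
  have hprod : ((1 : ℝ) / 2) ^ (primeSet n).card ≤ ∏ p ∈ primeSet n, (1 - 1 / (p.norm : ℝ)) := by
    rw [← Finset.prod_const]
    refine Finset.prod_le_prod (fun _ _ => by norm_num) fun p hp => ?_
    have h2 : (2 : ℝ) ≤ p.norm := by exact_mod_cast two_le_norm_of_prime (h1 p hp)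
    have : 1 / (p.norm : ℝ) ≤ 1 / 2 := one_div_le_one_div_of_le (by norm_num) h2
    linarith
  have hL : ((gaussUnits n).card : ℝ) = (n : ℝ) ^ 2 * ∏ p ∈ primeSet n, (1 - 1 / (p.norm : ℝ)) := by
    field_simp at heq
    linarith
  rw [hL, mul_assoc]
  refine le_mul_of_one_le_right (by positivity) ?_
  calc (1 : ℝ) = (1 / 2) ^ (primeSet n).card * 2 ^ (primeSet n).card := by
        rw [← mul_pow]; norm_num
    _ ≤ _ := by gcongr

theorem cross_add (n : ℕ) (v w : GaussianInt) (u : ZMod n × ZMod n) :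
    cross n (v + w) u = cross n v u + cross n w u := by
  simp [cross]; ring

theorem cross_intCast_mul (n : ℕ) (j : ℤ) (v : GaussianInt) (u : ZMod n × ZMod n) :
    cross n (j * v) u = j * cross n v u := by
  simp [cross, Zsqrtd.re_mul, Zsqrtd.im_mul]; ring

theorem dvd_of_cross_eq_zero {n : ℕ} [NeZero n] {u : ZMod n × ZMod n} (hu : u ∈ gaussUnits n)
    {v w : GaussianInt} (hv : cross n v u = 0) (hw : cross n w u = 0) :
    (n : ℤ) ∣ v.re * w.im - v.im * w.re := by
  obtain ⟨e, he⟩ := mem_gaussUnits.1 hu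
  rw [← ZMod.intCast_zmod_eq_zero_iff_dvd]
  push_cast
  refine (Units.mul_left_eq_zero e).1 ?_
  rw [he]
  rw [cross] at hv hw
  linear_combination (v.re * u.1 + v.im * u.2 : ZMod n) * hw -
    (w.re * u.1 + w.im * u.2 : ZMod n) * hv

theorem norm_ne_of_orthogonal {n : ℕ} [NeZero n] (hn : 2 ≤ n) {u : ZMod n × ZMod n}
    (hu : u ∈ gaussUnits n) {v w : GaussianInt} (hv : cross n v u = 0) (hw : cross n w u = 0)
    (hvw : w.re = -v.im ∧ w.im = v.re) : v.norm ≠ n := by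
  intro hN
  obtain ⟨e, he⟩ := mem_gaussUnits.1 hu
  rw [cross] at hv hw
  rw [hvw.1, hvw.2] at hw
  push_cast at hw
  have h1 : (n : ℤ) ∣ v.re := by
    rw [← ZMod.intCast_zmod_eq_zero_iff_dvd, ← Units.mul_left_eq_zero e, he]
    linear_combination u.1 * hw - u.2 * hv
  have h2 : (n : ℤ) ∣ v.im := by
    rw [← ZMod.intCast_zmod_eq_zero_iff_dvd, ← Units.mul_left_eq_zero e, he]
    linear_combination u.2 * hw + u.1 * hv
  obtain ⟨a, ha⟩ := h1
  obtain ⟨b, hb⟩ := h2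
  rw [norm_eq, ha, hb] at hN
  have hn0 : (n : ℤ) ≠ 0 := Nat.cast_ne_zero.2 (NeZero.ne n)
  have : (n : ℤ) * (a ^ 2 + b ^ 2) = 1 := mul_left_cancel₀ hn0 (by linear_combination hN)
  have h3 := Int.eq_one_or_neg_one_of_mul_eq_one this
  omega

theorem re_mul_im_sub_eq_zero {n : ℕ} [NeZero n] (hn : 2 ≤ n) {u : ZMod n × ZMod n}
    (hu : u ∈ gaussUnits n) {v w : GaussianInt} (hv : cross n v u = 0) (hw : cross n w u = 0)
    (hvn : v.norm ≤ n) (hwn : w.norm ≤ n) : v.re * w.im - v.im * w.re = 0 := by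
  obtain ⟨k, hk⟩ := dvd_of_cross_eq_zero hu hv hw
  have hn0 : (0 : ℤ) < n := Nat.cast_pos.2 (NeZero.pos n)
  have hv0 := GaussianInt.norm_nonneg v
  have hw0 := GaussianInt.norm_nonneg w
  have hlag : (v.re * w.im - v.im * w.re) ^ 2 + (v.re * w.re + v.im * w.im) ^ 2 =
      v.norm * w.norm := by
    rw [norm_eq, norm_eq]; ring
  by_contra hne
  have hk0 : k ≠ 0 := by rintro rfl; simp [hk] at hne
  have hk1 : 1 ≤ k ^ 2 := by
    have := sq_pos_of_ne_zero hk0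
    omega
  rw [hk] at hlag
  have hle : v.norm * w.norm ≤ n * n := mul_le_mul hvn hwn hw0 hn0.le
  have hdot : v.re * w.re + v.im * w.im = 0 := by
    have : (v.re * w.re + v.im * w.im) ^ 2 ≤ 0 := by nlinarith
    exact pow_eq_zero_iff (two_ne_zero) |>.1 (le_antisymm this (sq_nonneg _))
  have hk2 : k ^ 2 = 1 := by
    rw [hdot] at hlag
    nlinarith
  rw [hdot, mul_pow, hk2] at hlag
  have hvN : v.norm = n := by nlinarith
  have hwN : w.norm = n := by nlinarith
  rw [norm_eq] at hvN
  have hre : w.re = -k * v.im := mul_left_cancel₀ hn0.ne' (by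
    linear_combination v.re * hdot - v.im * hk - w.re * hvN)
  have him : w.im = k * v.re := mul_left_cancel₀ hn0.ne' (by
    linear_combination v.im * hdot + v.re * hk - w.im * hvN)
  rw [← norm_eq] at hvN
  refine norm_ne_of_orthogonal hn hu (w := k * w) hv
    (by rw [cross_intCast_mul, hw, mul_zero]) ?_ hvN
  constructor
  · simp [Zsqrtd.re_mul, hre]
    linear_combination v.im * hk2
  · simp [Zsqrtd.im_mul, him]
    linear_combination v.re * hk2

open scoped Classical in
/-- The invertible residues whose lattice has a nonzero vector of norm at most `n`. -/
noncomputable def shortUnits (n : ℕ) [NeZero n] : Finset (ZMod n × ZMod n) :=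
  (gaussUnits n).filter fun u => ∃ v : GaussianInt, v ≠ 0 ∧ v.norm ≤ n ∧ cross n v u = 0

theorem mem_shortUnits {n : ℕ} [NeZero n] {u : ZMod n × ZMod n} :
    u ∈ shortUnits n ↔ u ∈ gaussUnits n ∧
      ∃ v : GaussianInt, v ≠ 0 ∧ v.norm ≤ n ∧ cross n v u = 0 := by
  simp [shortUnits]

theorem exists_generator_of_mem_shortUnits {n : ℕ} [NeZero n] (hn : 2 ≤ n)
    {u : ZMod n × ZMod n} (hu : u ∈ shortUnits n) :
    ∃ v : GaussianInt, v ≠ 0 ∧ v.norm ≤ n ∧ cross n v u = 0 ∧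
      ∀ w : GaussianInt, w.norm ≤ n → cross n w u = 0 → ∃ j : ℤ, w = j * v := by
  obtain ⟨hu, hex⟩ := mem_shortUnits.1 hu
  obtain ⟨v, ⟨hv0, hvn, hvc⟩, hmin⟩ := WellFounded.has_min
    (measure fun v : GaussianInt => v.norm.natAbs).wf
    {v : GaussianInt | v ≠ 0 ∧ v.norm ≤ n ∧ cross n v u = 0} hex
  refine ⟨v, hv0, hvn, hvc, fun w hwn hwc => ?_⟩
  have hdet := re_mul_im_sub_eq_zero hn hu hvc hwc hvn hwn
  have hm : 0 < v.norm := GaussianInt.norm_pos.2 hv0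
  set m := v.norm with hm'
  rw [norm_eq] at hm'
  set e := v.re * w.re + v.im * w.im with he
  set q := e / m with hq
  refine ⟨q, ?_⟩
  by_contra hne
  set r := w + ((-q : ℤ) : GaussianInt) * v with hr
  have hrc : cross n r u = 0 := by
    rw [hr, cross_add, cross_intCast_mul, hwc, hvc, mul_zero, add_zero]
  have hr0 : r ≠ 0 := fun h => hne (by
    rw [hr] at h
    push_cast at h
    linear_combination h)
  have hre : r.re = w.re - q * v.re := by simp [hr, Zsqrtd.re_mul]; ring
  have him : r.im = w.im - q * v.im := by simp [hr, Zsqrtd.im_mul]; ring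
  have hmod : e % m = e - m * q := by rw [hq, Int.emod_def]
  have h1 : m * r.re = (e % m) * v.re := by
    rw [hre, hmod, he]
    linear_combination (w.re) * hm' + (-v.im) * hdet
  have h2 : m * r.im = (e % m) * v.im := by
    rw [him, hmod, he]
    linear_combination (w.im) * hm' + (v.re) * hdet
  have h3 : m * r.norm = (e % m) ^ 2 := by
    rw [norm_eq]
    refine mul_left_cancel₀ hm.ne' ?_
    linear_combination (m * r.re + (e % m) * v.re) * h1 + (m * r.im + (e % m) * v.im) * h2 -
      (e % m) ^ 2 * hm'
  have h4 := Int.emod_nonneg e hm.ne'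
  have h5 := Int.emod_lt_of_pos e hm
  have hlt : r.norm < m := by nlinarith
  refine hmin r ⟨hr0, hlt.le.trans hvn, hrc⟩ ?_
  change r.norm.natAbs < v.norm.natAbs
  have := GaussianInt.norm_nonneg r
  omega

theorem lineCount_div_sq {n : ℕ} {u : ZMod n × ZMod n} {v : GaussianInt} (hv0 : v ≠ 0)
    (hvc : cross n v u = 0)
    (hv : ∀ w : GaussianInt, w.norm ≤ n → cross n w u = 0 → ∃ j : ℤ, w = j * v)
    {k : ℕ} (hk : 0 < k) :
    lineCount n u (n / (k : ℝ) ^ 2) = 2 * (Nat.sqrt (n / v.norm.natAbs) / k) := by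
  classical
  have hm := GaussianInt.norm_pos.2 hv0
  obtain ⟨m, hm'⟩ : ∃ m : ℕ, v.norm = m := ⟨v.norm.natAbs, by omega⟩
  rw [hm', Int.natAbs_natCast]
  have hm0 : 0 < m := by omega
  obtain ⟨M, hM⟩ : ∃ M, M = Nat.sqrt (n / m) / k := ⟨_, rfl⟩
  rw [← hM]
  have hnorm : ∀ j : ℤ, (((j : GaussianInt) * v).norm : ℝ) ≤ n / (k : ℝ) ^ 2 ↔
      j.natAbs ≤ M := by
    intro j
    rw [Zsqrtd.norm_mul, Zsqrtd.norm_intCast, hm', hM, Nat.le_div_iff_mul_le hk, Nat.le_sqrt,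
      Nat.le_div_iff_mul_le hm0, le_div_iff₀ (by positivity)]
    have : (((j * j * (m : ℤ) : ℤ) : ℝ)) * (k : ℝ) ^ 2 =
        ((j.natAbs * k * (j.natAbs * k) * m : ℕ) : ℝ) := by
      push_cast
      rw [Nat.cast_natAbs]
      push_cast
      have := abs_mul_abs_self (j : ℝ)
      linear_combination -(m : ℝ) * (k : ℝ) ^ 2 * this
    rw [this]
    exact Nat.cast_le
  have hinj : Function.Injective fun j : ℤ => (j : GaussianInt) * v := fun a b h =>
    Int.cast_injective (mul_right_cancel₀ hv0 h)
  have hset : (disc (n / (k : ℝ) ^ 2)).filter (fun w => cross n w u = 0) =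
      ((Finset.Icc (-(M : ℤ)) M).erase 0).image fun j : ℤ => (j : GaussianInt) * v := by
    ext w
    rw [Finset.mem_filter, mem_disc, Finset.mem_image]
    constructor
    · rintro ⟨⟨hw0, hwX⟩, hwc⟩
      have hwn : w.norm ≤ n := by
        have h1 : (n : ℝ) / (k : ℝ) ^ 2 ≤ n := div_le_self (Nat.cast_nonneg n)
          (one_le_pow₀ (Nat.one_le_cast.2 hk))
        exact_mod_cast hwX.trans h1
      obtain ⟨j, rfl⟩ := hv w hwn hwc
      rw [hnorm] at hwX
      refine ⟨j, ?_, rfl⟩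
      rw [Finset.mem_erase, Finset.mem_Icc]
      refine ⟨?_, by omega, by omega⟩
      rintro rfl
      simp at hw0
    · rintro ⟨j, hj, rfl⟩
      rw [Finset.mem_erase, Finset.mem_Icc] at hj
      rw [hnorm, cross_intCast_mul, hvc, mul_zero]
      exact ⟨⟨mul_ne_zero (Int.cast_ne_zero.2 hj.1) hv0, by omega⟩, rfl⟩
  clear hM
  rw [lineCount, hset, Finset.card_image_of_injective _ hinj, Finset.card_erase_of_mem
    (Finset.mem_Icc.2 (by omega)), Int.card_Icc]
  omega

open ArithmeticFunction in
theorem sum_moebius_mul_div {M n : ℕ} (hM : 0 < M) (hMn : M ≤ n) :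
    ∑ k ∈ Finset.Ioc 0 n, moebius k * ((M / k : ℕ) : ℤ) = 1 := by
  rw [← Finset.sum_subset (Finset.Ioc_subset_Ioc_right hMn)]
  · have := sum_Ioc_mul_zeta_eq_sum (R := ℤ) moebius M
    rw [moebius_mul_coe_zeta] at this
    rw [← this, Finset.sum_eq_single 1]
    · simp
    · intro b _ hb
      exact ArithmeticFunction.one_apply_ne hb
    · intro h
      exact absurd (Finset.mem_Ioc.2 ⟨one_pos, hM⟩) h
  · intro k hk hk'
    rw [Finset.mem_Ioc] at hk hk'
    rw [Nat.div_eq_of_lt (by omega), Nat.cast_zero, mul_zero]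

open ArithmeticFunction in
theorem sum_moebius_mul_lineCount {n : ℕ} [NeZero n] (hn : 2 ≤ n) {u : ZMod n × ZMod n}
    (hu : u ∈ gaussUnits n) [Decidable (u ∈ shortUnits n)] :
    ∑ k ∈ Finset.Ioc 0 n, moebius k * (lineCount n u (n / (k : ℝ) ^ 2) : ℤ) =
      if u ∈ shortUnits n then 2 else 0 := by
  split_ifs with h
  · obtain ⟨v, hv0, hvn, hvc, hv⟩ := exists_generator_of_mem_shortUnits hn h
    have hm := GaussianInt.norm_pos.2 hv0
    have hM : 0 < Nat.sqrt (n / v.norm.natAbs) :=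
      Nat.sqrt_pos.2 (Nat.div_pos (by omega) (by omega))
    have hMn : Nat.sqrt (n / v.norm.natAbs) ≤ n := (Nat.sqrt_le_self _).trans (Nat.div_le_self _ _)
    rw [← mul_one (2 : ℤ), ← sum_moebius_mul_div hM hMn, Finset.mul_sum]
    refine Finset.sum_congr rfl fun k hk => ?_
    rw [lineCount_div_sq hv0 hvc hv (Finset.mem_Ioc.1 hk).1]
    push_cast; ring
  · refine Finset.sum_eq_zero fun k hk => ?_
    have : lineCount n u (n / (k : ℝ) ^ 2) = 0 := by
      rw [lineCount, Finset.card_eq_zero, Finset.filter_eq_empty_iff]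
      intro v hv hvc
      rw [mem_disc] at hv
      have h1 : (n : ℝ) / (k : ℝ) ^ 2 ≤ n := div_le_self (Nat.cast_nonneg n)
        (one_le_pow₀ (Nat.one_le_cast.2 (Finset.mem_Ioc.1 hk).1))
      exact h (mem_shortUnits.2 ⟨hu, v, hv.1, by exact_mod_cast hv.2.trans h1, hvc⟩)
    rw [this, Nat.cast_zero, mul_zero]

open ArithmeticFunction in
theorem two_mul_card_shortUnits {n : ℕ} [NeZero n] (hn : 2 ≤ n) :
    2 * ((shortUnits n).card : ℝ) =
      ∑ k ∈ Finset.Ioc 0 n, (moebius k : ℝ) * latticeCount n (n / (k : ℝ) ^ 2) := by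
  classical
  have h : 2 * ((shortUnits n).card : ℤ) =
      ∑ k ∈ Finset.Ioc 0 n, moebius k * (latticeCount n (n / (k : ℝ) ^ 2) : ℤ) := by
    simp only [latticeCount_eq_sum_lineCount, Nat.cast_sum, Finset.mul_sum]
    rw [Finset.sum_comm, Finset.sum_congr rfl fun u hu => sum_moebius_mul_lineCount hn hu,
      ← Finset.sum_filter, Finset.sum_const, nsmul_eq_mul, mul_comm]
    congr 3
    ext u
    rw [Finset.mem_filter, and_iff_right_of_imp fun h => (mem_shortUnits.1 h).1]
  exact_mod_cast h

open ArithmeticFunction in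
theorem abs_two_mul_card_shortUnits_sub_le {n : ℕ} [NeZero n] (hn : 2 ≤ n) :
    |2 * ((shortUnits n).card : ℝ) -
        Real.pi * (gaussUnits n).card * ∑ k ∈ Finset.Ioc 0 n, (moebius k : ℝ) / (k : ℝ) ^ 2| ≤
      (8 * Real.pi + 1) * n * n.divisors.card * 2 ^ (primeSet n).card * √n *
        (1 + Real.log n) := by
  have hn0 : (n : ℝ) ≠ 0 := Nat.cast_ne_zero.2 (NeZero.ne n)
  have hpi := Real.pi_pos
  rw [two_mul_card_shortUnits hn, Finset.mul_sum, ← Finset.sum_sub_distrib]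
  set B := (8 * Real.pi + 1) * n * n.divisors.card * 2 ^ (primeSet n).card * √n with hB
  have hB0 : 0 ≤ B := by positivity
  have hterm : ∀ k ∈ Finset.Ioc 0 n, |(moebius k : ℝ) * latticeCount n (n / (k : ℝ) ^ 2) -
      Real.pi * (gaussUnits n).card * ((moebius k : ℝ) / (k : ℝ) ^ 2)| ≤ B * (k : ℝ)⁻¹ := by
    intro k hk
    have hk0 : (0 : ℝ) < k := Nat.cast_pos.2 (Finset.mem_Ioc.1 hk).1
    have h := abs_latticeCount_sub_le n (X := n / (k : ℝ) ^ 2) (by positivity)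
    rw [Real.sqrt_div (Nat.cast_nonneg n), Real.sqrt_sq hk0.le] at h
    have hmu : |(moebius k : ℝ)| ≤ 1 := by exact_mod_cast abs_moebius_le_one (n := k)
    have h1 : (moebius k : ℝ) * latticeCount n (n / (k : ℝ) ^ 2) -
        Real.pi * (gaussUnits n).card * ((moebius k : ℝ) / (k : ℝ) ^ 2) =
        moebius k * (latticeCount n (n / (k : ℝ) ^ 2) -
          Real.pi * (gaussUnits n).card / n * (n / (k : ℝ) ^ 2)) := by
      field_simp
    rw [h1, abs_mul]
    refine (mul_le_of_le_one_left (abs_nonneg _) hmu).trans (h.trans (le_of_eq ?_))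
    rw [hB]; ring
  refine (Finset.abs_sum_le_sum_abs _ _).trans ((Finset.sum_le_sum hterm).trans ?_)
  rw [← Finset.mul_sum]
  refine mul_le_mul_of_nonneg_left ?_ hB0
  have h := harmonic_le_one_add_log n
  rw [harmonic_eq_sum_Icc] at h
  push_cast at h
  exact h

open ArithmeticFunction in
theorem tendsto_sum_moebius_div_sq :
    Filter.Tendsto (fun n : ℕ => ∑ k ∈ Finset.Ioc 0 n, (moebius k : ℝ) / (k : ℝ) ^ 2) Filter.atTop
      (nhds (6 / Real.pi ^ 2)) := by
  have hs : 1 < (2 : ℂ).re := by norm_num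
  have hsum := (LSeriesSummable_moebius_iff.2 hs).hasSum
  have hval : ∑' k, LSeries.term (fun k => (moebius k : ℂ)) 2 k = 6 / (Real.pi : ℂ) ^ 2 := by
    have h := LSeries_zeta_mul_Lseries_moebius hs
    rw [LSeries_zeta_eq_riemannZeta hs, riemannZeta_two] at h
    have hpi : (Real.pi : ℂ) ≠ 0 := Complex.ofReal_ne_zero.2 Real.pi_ne_zero
    rw [LSeries] at h
    field_simp at h ⊢
    linear_combination h
  rw [hval] at hsum
  have hterm : ∀ k, LSeries.term (fun k => (moebius k : ℂ)) 2 k =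
      (((moebius k : ℝ) / (k : ℝ) ^ 2 : ℝ) : ℂ) := by
    intro k
    rw [LSeries.term_of_ne_zero' two_ne_zero]
    push_cast
    norm_cast
  have hsum' : HasSum (fun k : ℕ => (moebius k : ℝ) / (k : ℝ) ^ 2) (6 / Real.pi ^ 2) := by
    rw [← Complex.hasSum_ofReal]
    push_cast
    convert hsum using 2 with k
    rw [hterm]; push_cast; rfl
  have h1 := (Filter.tendsto_add_atTop_iff_nat 1).2 hsum'.tendsto_sum_nat
  refine h1.congr fun n => ?_
  rw [Finset.range_eq_Ico, Finset.sum_eq_sum_Ico_succ_bot (Nat.succ_pos n)]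
  simp only [Nat.cast_zero, zero_add, ArithmeticFunction.map_zero, Int.cast_zero, zero_div]
  refine Finset.sum_congr ?_ fun _ _ => rfl
  ext k; simp; omega

/-- The binary quadratic form `A x² + 2 β x y + C y²` is primitive, positive, and has
determinant `n²`. -/
def IsForm (n : ℕ) (A β C : ℤ) : Prop :=
  A * C - β ^ 2 = (n : ℤ) ^ 2 ∧ 0 ≤ A ∧ 0 ≤ C ∧
    ∀ p : ℕ, p.Prime → (p : ℤ) ∣ A → (p : ℤ) ∣ β → ¬ (p : ℤ) ∣ C

namespace IsForm

variable {n : ℕ} {A β C : ℤ}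

theorem neg (h : IsForm n A β C) : IsForm n A (-β) C :=
  ⟨by rw [← h.1]; ring, h.2.1, h.2.2.1, fun p hp hA hβ => h.2.2.2 p hp hA ((dvd_neg).1 hβ)⟩

theorem swap (h : IsForm n A β C) : IsForm n C β A :=
  ⟨by rw [← h.1]; ring, h.2.2.1, h.2.1, fun p hp hC hβ hA => h.2.2.2 p hp hA hβ hC⟩

theorem left_pos [NeZero n] (h : IsForm n A β C) : 0 < A := by
  have hn : 0 < (n : ℤ) ^ 2 := pow_pos (Nat.cast_pos.2 (NeZero.pos n)) 2
  refine lt_of_le_of_ne h.2.1 fun h0 => ?_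
  have := h.1
  rw [← h0] at this
  nlinarith [sq_nonneg β]

theorem shift (h : IsForm n A β C) : IsForm n (A + C - 2 * β) (C - β) C := by
  obtain ⟨h1, h2, h3, h4⟩ := h
  refine ⟨by rw [← h1]; ring, ?_, h3, fun p hp hA hβ hC => ?_⟩
  · nlinarith [sq_nonneg (A - C), sq_nonneg (A + C + 2 * β), sq_nonneg (n : ℤ)]
  · have h5 : (p : ℤ) ∣ β := by
      have := dvd_sub hC hβ
      rwa [sub_sub_cancel] at this
    refine h4 p hp ?_ h5 hC
    have h6 : A = (A + C - 2 * β) - C + 2 * β := by ring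
    rw [h6]
    exact dvd_add (dvd_sub hA hC) (h5.mul_left 2)

end IsForm

theorem exists_reduced {R : ℤ → ℤ → ℤ → Prop} (hpos : ∀ {A β C}, R A β C → 0 ≤ A ∧ 0 ≤ C)
    (hneg : ∀ {A β C}, R A β C → R A (-β) C) (hswap : ∀ {A β C}, R A β C → R C β A)
    (hshift : ∀ {A β C}, R A β C → R (A + C - 2 * β) (C - β) C) {A β C : ℤ} (h : R A β C) :
    ∃ A β C, R A β C ∧ 0 ≤ β ∧ 2 * β ≤ A ∧ A ≤ C := by
  suffices H : ∀ (k : ℕ) (A β C : ℤ), A + C ≤ k → R A β C →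
      ∃ A β C, R A β C ∧ 0 ≤ β ∧ 2 * β ≤ A ∧ A ≤ C from
    H (A + C).toNat A β C (Int.self_le_toNat _) h
  intro k
  induction k using Nat.strong_induction_on with
  | _ k ih =>
    intro A β C hk h
    wlog hβ : 0 ≤ β generalizing β
    · exact this (-β) (hneg h) (by omega)
    wlog hAC : A ≤ C generalizing A C
    · exact this C A (by omega) (hswap h) (by omega)
    by_cases h2 : 2 * β ≤ A
    · exact ⟨A, β, C, h, hβ, h2, hAC⟩
    · have h3 := hshift (hswap h)
      have h4 := hpos h3
      exact ih (A + C + A - 2 * β).toNat (by omega) _ _ _ (by omega) h3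

theorem le_form_of_ne_zero {A β C x y : ℤ} (hβ : |2 * β| ≤ A) (hAC : A ≤ C) (hy : y ≠ 0) :
    C ≤ A * x ^ 2 + 2 * β * x * y + C * y ^ 2 := by
  have hA : 0 ≤ A := (abs_nonneg _).trans hβ
  have h1 : -(A * (|x| * |y|)) ≤ 2 * β * x * y := by
    have h2 : |2 * β * x * y| ≤ A * (|x| * |y|) := by
      rw [mul_assoc (2 * β), abs_mul, abs_mul x]
      exact mul_le_mul_of_nonneg_right hβ (by positivity)
    exact (abs_le.1 h2).1
  have hy1 : 1 ≤ |y| := Int.one_le_abs hy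
  have hx0 := abs_nonneg x
  have h3 : 1 ≤ |x| ^ 2 - |x| * |y| + |y| ^ 2 := by
    by_contra hlt
    nlinarith [sq_nonneg (2 * |x| - |y|)]
  have h4 : 1 ≤ |y| ^ 2 := one_le_pow₀ hy1
  rw [← sq_abs x, ← sq_abs y]
  nlinarith [mul_le_mul_of_nonneg_left h3 hA, mul_le_mul_of_nonneg_left h4 (sub_nonneg.2 hAC)]

theorem le_form {A β C x y : ℤ} (hβ : |2 * β| ≤ A) (hAC : A ≤ C) (hxy : x ≠ 0 ∨ y ≠ 0) :
    A ≤ A * x ^ 2 + 2 * β * x * y + C * y ^ 2 := by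
  by_cases hy : y = 0
  · subst hy
    have hA : 0 ≤ A := (abs_nonneg _).trans hβ
    have hx : 0 < x ^ 2 := sq_pos_of_ne_zero (hxy.resolve_right (by simp))
    nlinarith
  · exact hAC.trans (le_form_of_ne_zero hβ hAC hy)

theorem eq_of_reduced {A β C A' β' C' a b c d : ℤ} (h1 : |2 * β| < A) (h2 : A < C)
    (h1' : |2 * β'| < A') (h2' : A' < C') (hdet : (a * d - b * c) ^ 2 = 1)
    (hA' : A' = A * a ^ 2 + 2 * β * a * c + C * c ^ 2)
    (hβ' : β' = A * a * b + β * (a * d + b * c) + C * c * d)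
    (hC' : C' = A * b ^ 2 + 2 * β * b * d + C * d ^ 2) :
    A' = A ∧ β' = (a * d - b * c) * β ∧ C' = C := by
  have hA0 : 0 < A := (abs_nonneg _).trans_lt h1
  have hle : A ≤ A' := by
    rw [hA']
    refine le_form h1.le h2.le ?_
    by_contra hne
    push Not at hne
    rw [hne.1, hne.2] at hdet
    norm_num at hdet
  have hge : A' ≤ A := by
    have : A = A' * d ^ 2 + 2 * β' * d * (-c) + C' * (-c) ^ 2 := by
      rw [hA', hβ', hC']
      linear_combination (-A) * hdet
    rw [this]
    refine le_form h1'.le h2'.le ?_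
    by_contra hne
    push Not at hne
    rw [hne.1, neg_eq_zero.1 hne.2] at hdet
    norm_num at hdet
  have hAA : A' = A := le_antisymm hge hle
  have hc : c = 0 := by
    by_contra hc
    have := le_form_of_ne_zero (x := a) h1.le h2.le hc
    omega
  subst hc
  have hda : (a * d) ^ 2 = 1 := by linear_combination hdet
  have hu := Int.isUnit_iff.1
    (IsUnit.of_mul_eq_one (M := ℤ) (a := a) (d * (a * d)) (by linear_combination hda))
  have hv := Int.isUnit_iff.1
    (IsUnit.of_mul_eq_one (M := ℤ) (a := d) (a * (a * d)) (by linear_combination hda))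
  have hd2 : d ^ 2 = 1 := by rcases hv with rfl | rfl <;> norm_num
  have hb : b = 0 := by
    rw [abs_lt] at h1 h1'
    by_contra hb
    have hb' : A * b ≤ -A ∨ A ≤ A * b := by
      rcases lt_or_gt_of_ne hb with h | h
      · exact Or.inl (by nlinarith)
      · exact Or.inr (by nlinarith)
    generalize hab : A * b = e at hb'
    have h5 : β' = a * e + a * d * β := by rw [hβ', ← hab]; ring
    rcases hu with rfl | rfl <;> rcases hv with rfl | rfl <;> rcases hb' with h | h <;>
      linarith
  subst hb
  refine ⟨hAA, by rw [hβ']; ring, ?_⟩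
  rw [hC']
  linear_combination C * hd2

open Classical in
/-- The reduced forms of determinant `n²`, as triples `(A, β, C)`. -/
noncomputable def reducedForms (n : ℕ) : Finset (ℤ × ℤ × ℤ) :=
  (Finset.Icc 0 (2 * (n : ℤ) ^ 2) ×ˢ Finset.Icc 0 (2 * (n : ℤ) ^ 2) ×ˢ
    Finset.Icc 0 (2 * (n : ℤ) ^ 2)).filter fun t =>
      IsForm n t.1 t.2.1 t.2.2 ∧ 0 ≤ t.2.1 ∧ 2 * t.2.1 ≤ t.1 ∧ t.1 ≤ t.2.2

open Classical in
theorem mem_reducedForms {n : ℕ} [NeZero n] {t : ℤ × ℤ × ℤ} :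
    t ∈ reducedForms n ↔
      IsForm n t.1 t.2.1 t.2.2 ∧ 0 ≤ t.2.1 ∧ 2 * t.2.1 ≤ t.1 ∧ t.1 ≤ t.2.2 := by
  unfold reducedForms
  rw [Finset.mem_filter, and_iff_right_of_imp]
  rintro ⟨h, h1, h2, h3⟩
  obtain ⟨A, β, C⟩ := t
  simp only at h h1 h2 h3
  have hA := h.left_pos
  have hdet := h.1
  have h4 : C ≤ 2 * (n : ℤ) ^ 2 := by
    have h5 : 4 * β ^ 2 ≤ A * C := by nlinarith
    nlinarith
  simp only [Finset.mem_product, Finset.mem_Icc]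
  refine ⟨⟨?_, ?_⟩, ⟨?_, ?_⟩, ?_, ?_⟩ <;> linarith

/-- The reduced forms in the interior of the fundamental domain. -/
noncomputable def interiorForms (n : ℕ) : Finset (ℤ × ℤ × ℤ) :=
  (reducedForms n).filter fun t => 0 < t.2.1 ∧ 2 * t.2.1 < t.1 ∧ t.1 < t.2.2

theorem mem_interiorForms {n : ℕ} [NeZero n] {t : ℤ × ℤ × ℤ} :
    t ∈ interiorForms n ↔
      IsForm n t.1 t.2.1 t.2.2 ∧ 0 < t.2.1 ∧ 2 * t.2.1 < t.1 ∧ t.1 < t.2.2 := by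
  unfold interiorForms
  rw [Finset.mem_filter, mem_reducedForms]
  constructor
  · rintro ⟨h, h'⟩
    exact ⟨h.1, h'⟩
  · rintro ⟨h, h1, h2, h3⟩
    exact ⟨⟨h, h1.le, h2.le, h3.le⟩, h1, h2, h3⟩

theorem card_le_card_divisors {α : Type*} {s : Finset α} {m : ℕ} (hm : m ≠ 0) (f : α → ℤ)
    (hpos : ∀ t ∈ s, 0 < f t) (hdvd : ∀ t ∈ s, f t ∣ m) (hinj : Set.InjOn f s) :
    s.card ≤ m.divisors.card := by
  refine Finset.card_le_card_of_injOn (fun t => (f t).toNat) (fun t ht => ?_)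
    fun t ht t' ht' h => hinj ht ht' ?_
  · have h1 := Int.toNat_of_nonneg (hpos t ht).le
    rw [Finset.mem_coe, Nat.mem_divisors]
    exact ⟨by rw [← Int.natCast_dvd_natCast, h1]; exact hdvd t ht, hm⟩
  · have h1 := hpos t ht
    have h2 := hpos t' ht'
    simp only at h
    omega

theorem card_reducedForms_filter_le (n : ℕ) [NeZero n] (P : ℤ × ℤ × ℤ → Prop) [DecidablePred P] :
    ((reducedForms n).filter P).card ≤
      ((interiorForms n).filter P).card + 3 * (4 * n ^ 2).divisors.card := by
  have hn : 4 * n ^ 2 ≠ 0 := mul_ne_zero (by norm_num) (pow_ne_zero 2 (NeZero.ne n))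
  have hsub : (reducedForms n).filter P ⊆ (interiorForms n).filter P ∪
      ((reducedForms n).filter (fun t => t.2.1 = 0) ∪
        ((reducedForms n).filter (fun t => 2 * t.2.1 = t.1) ∪
          (reducedForms n).filter fun t => t.1 = t.2.2)) := by
    intro t ht
    simp only [interiorForms, Finset.mem_union, Finset.mem_filter] at ht ⊢
    have := mem_reducedForms.1 ht.1
    by_cases h0 : t.2.1 = 0
    · exact Or.inr (Or.inl ⟨ht.1, h0⟩)
    by_cases h1 : 2 * t.2.1 = t.1
    · exact Or.inr (Or.inr (Or.inl ⟨ht.1, h1⟩))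
    by_cases h2 : t.1 = t.2.2
    · exact Or.inr (Or.inr (Or.inr ⟨ht.1, h2⟩))
    exact Or.inl ⟨⟨ht.1, by omega, by omega, by omega⟩, ht.2⟩
  have c1 : ((reducedForms n).filter fun t => t.2.1 = 0).card ≤ (4 * n ^ 2).divisors.card := by
    refine card_le_card_divisors hn (fun t => t.1) ?_ ?_ ?_
    · intro t ht
      exact (mem_reducedForms.1 (Finset.mem_filter.1 ht).1).1.left_pos
    · intro t ht
      obtain ⟨ht, h⟩ := Finset.mem_filter.1 ht
      have := (mem_reducedForms.1 ht).1.1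
      refine ⟨4 * t.2.2, ?_⟩
      push_cast
      rw [h] at this
      linear_combination -4 * this
    · rintro ⟨A, β, C⟩ ht ⟨A', β', C'⟩ ht' h
      simp only [Finset.coe_filter, Set.mem_ofPred_eq, mem_reducedForms] at ht ht' h
      obtain ⟨ht, rfl⟩ := ht
      obtain ⟨ht', rfl⟩ := ht'
      subst h
      have : C = C' := mul_left_cancel₀ ht.1.left_pos.ne' (by linarith [ht.1.1, ht'.1.1])
      rw [this]
  have c2 : ((reducedForms n).filter fun t => 2 * t.2.1 = t.1).card ≤
      (4 * n ^ 2).divisors.card := by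
    refine card_le_card_divisors hn (fun t => t.1) ?_ ?_ ?_
    · intro t ht
      exact (mem_reducedForms.1 (Finset.mem_filter.1 ht).1).1.left_pos
    · intro t ht
      obtain ⟨ht, h⟩ := Finset.mem_filter.1 ht
      have := (mem_reducedForms.1 ht).1.1
      refine ⟨4 * t.2.2 - t.1, ?_⟩
      push_cast
      rw [← h] at this ⊢
      linear_combination -4 * this
    · rintro ⟨A, β, C⟩ ht ⟨A', β', C'⟩ ht' h
      simp only [Finset.coe_filter, Set.mem_ofPred_eq, mem_reducedForms] at ht ht' h
      obtain ⟨ht, h1⟩ := ht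
      obtain ⟨ht', h1'⟩ := ht'
      subst h
      have h2 : β = β' := by omega
      subst h2
      have : C = C' := mul_left_cancel₀ ht.1.left_pos.ne' (by linarith [ht.1.1, ht'.1.1])
      rw [this]
  have c3 : ((reducedForms n).filter fun t => t.1 = t.2.2).card ≤
      (4 * n ^ 2).divisors.card := by
    refine card_le_card_divisors hn (fun t => t.1 - t.2.1) ?_ ?_ ?_
    · intro t ht
      have := mem_reducedForms.1 (Finset.mem_filter.1 ht).1
      have h0 := this.1.left_pos
      omega
    · intro t ht
      obtain ⟨ht, h⟩ := Finset.mem_filter.1 ht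
      have := (mem_reducedForms.1 ht).1.1
      refine ⟨4 * (t.1 + t.2.1), ?_⟩
      push_cast
      rw [← h] at this
      linear_combination -4 * this
    · rintro ⟨A, β, C⟩ ht ⟨A', β', C'⟩ ht' h
      simp only [Finset.coe_filter, Set.mem_ofPred_eq, mem_reducedForms] at ht ht' h
      obtain ⟨ht, rfl⟩ := ht
      obtain ⟨ht', rfl⟩ := ht'
      have h0 := ht.1.left_pos
      have h1 := ht.1.1
      have h1' := ht'.1.1
      have : A + β = A' + β' := by
        refine mul_left_cancel₀ (a := A - β) (by omega) ?_
        rw [show (A - β) * (A' + β') = (A' - β') * (A' + β') by rw [h]]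
        linear_combination h1 - h1'
      have hA : A = A' := by omega
      have hβ : β = β' := by omega
      rw [hA, hβ]
  have := Finset.card_le_card hsub
  have d1 := Finset.card_union_le ((interiorForms n).filter P)
    ((reducedForms n).filter (fun t => t.2.1 = 0) ∪
        ((reducedForms n).filter (fun t => 2 * t.2.1 = t.1) ∪
          (reducedForms n).filter fun t => t.1 = t.2.2))
  have d2 := Finset.card_union_le ((reducedForms n).filter (fun t => t.2.1 = 0))
        ((reducedForms n).filter (fun t => 2 * t.2.1 = t.1) ∪
          (reducedForms n).filter fun t => t.1 = t.2.2)
  have d3 := Finset.card_union_le ((reducedForms n).filter (fun t => 2 * t.2.1 = t.1))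
          ((reducedForms n).filter fun t => t.1 = t.2.2)
  omega

section

variable {n : ℕ} {A β C : ℤ}

theorem IsForm.exists_bezout (h : IsForm n A β C) :
    ∃ x y z : ℤ, x * A + y * C + z * (2 * β) = 1 := by
  obtain ⟨hdet, -, -, hp⟩ := h
  have hg : Int.gcd A (Int.gcd C (2 * β)) = 1 := by
    by_contra hne
    obtain ⟨p, hpp, hpg⟩ := Nat.exists_prime_and_dvd hne
    have hpg' := Int.natCast_dvd_natCast.2 hpg
    have hA : (p : ℤ) ∣ A := hpg'.trans (Int.gcd_dvd_left ..)
    have h2 : (p : ℤ) ∣ (Int.gcd C (2 * β) : ℤ) := hpg'.trans (Int.gcd_dvd_right ..)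
    have hC : (p : ℤ) ∣ C := h2.trans (Int.gcd_dvd_left ..)
    have h2β : (p : ℤ) ∣ 2 * β := h2.trans (Int.gcd_dvd_right ..)
    rcases (Nat.prime_iff_prime_int.1 hpp).dvd_or_dvd h2β with h2 | hβ
    · have h2' : p = 2 := (Nat.prime_dvd_prime_iff_eq hpp Nat.prime_two).1 (by exact_mod_cast h2)
      subst h2'
      have hβ := fun hβ => hp 2 hpp hA hβ hC
      obtain ⟨a, ha⟩ := hA
      obtain ⟨c, hc⟩ := hC
      have hodd : β % 2 = 1 := by
        by_contra hh
        exact hβ (by omega)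
      obtain ⟨b, hb⟩ : ∃ b, β = 2 * b + 1 := ⟨β / 2, by omega⟩
      have h4 : (n : ℤ) ^ 2 = 4 * (a * c - b ^ 2 - b - 1) + 3 := by
        rw [← hdet, ha, hc, hb]
        push_cast
        ring
      have h5 : (n : ℤ) ^ 2 % 4 = 3 := by omega
      rcases Int.even_or_odd' (n : ℤ) with ⟨k, hk | hk⟩ <;> rw [hk] at h5 <;> ring_nf at h5 <;>
        omega
    · exact hp p hpp hA hβ hC
  have h1 := Int.gcd_eq_gcd_ab A (Int.gcd C (2 * β))
  rw [hg] at h1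
  have h2 := Int.gcd_eq_gcd_ab C (2 * β)
  generalize Int.gcdA A (Int.gcd C (2 * β)) = r at h1
  generalize Int.gcdB A (Int.gcd C (2 * β)) = t at h1
  refine ⟨r, t * Int.gcdA C (2 * β), t * Int.gcdB C (2 * β), ?_⟩
  push_cast at h1
  linear_combination -h1 - t * h2

/-- `v` and `w` form a positively oriented pair with Gram matrix `(A, β; β, C)` and
determinant `n`. -/
def IsPair (n : ℕ) (A β C : ℤ) (v w : GaussianInt) : Prop :=
  v.norm = A ∧ w.norm = C ∧ v.re * w.re + v.im * w.im = β ∧ v.re * w.im - v.im * w.re = n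

theorem isPair_iff_star_mul {v w : GaussianInt} :
    (v.re * w.re + v.im * w.im = β ∧ v.re * w.im - v.im * w.re = n) ↔
      star v * w = ⟨β, n⟩ := by
  rw [Zsqrtd.ext_iff]
  simp only [Zsqrtd.re_mul, Zsqrtd.im_mul, Zsqrtd.re_star, Zsqrtd.im_star]
  constructor <;> rintro ⟨h1, h2⟩ <;> constructor <;> linarith

theorem IsPair.exists_of_isForm [NeZero n] (h : IsForm n A β C) : ∃ v w, IsPair n A β C v w := by
  obtain ⟨x, y, z, hxyz⟩ := h.exists_bezout
  set ω : GaussianInt := ⟨β, n⟩ with hω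
  have hA0 := h.left_pos
  have hωω : ω * star ω = (A : GaussianInt) * (C : GaussianInt) := by
    rw [← Zsqrtd.norm_eq_mul_conj, ← Int.cast_mul]
    congr 1
    rw [norm_eq, hω]
    linear_combination -h.1
  have hω2 : ω + star ω = 2 * (β : GaussianInt) := by
    rw [Zsqrtd.ext_iff]
    simp [hω]
    ring
  set δ := EuclideanDomain.gcd (A : GaussianInt) ω with hδ
  obtain ⟨α, hα⟩ := EuclideanDomain.gcd_dvd_left (A : GaussianInt) ω
  obtain ⟨γ, hγ⟩ := EuclideanDomain.gcd_dvd_right (A : GaussianInt) ω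
  have hbez := EuclideanDomain.gcd_eq_gcd_ab (A : GaussianInt) ω
  rw [← hδ] at hα hγ hbez
  have hstarA : star (A : GaussianInt) = A := by simp
  generalize EuclideanDomain.gcdA (A : GaussianInt) ω = a at hbez
  generalize EuclideanDomain.gcdB (A : GaussianInt) ω = b at hbez
  have hα' : (A : GaussianInt) = star δ * star α := by rw [← hstarA, hα, star_mul, mul_comm]
  have hγ' : star ω = star δ * star γ := by rw [hγ, star_mul, mul_comm]
  have hbez' : star δ = A * star a + star ω * star b := by
    rw [hbez, star_add, star_mul, star_mul, hstarA]
    ring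
  have hx : (x : GaussianInt) * A + y * C + z * (ω + star ω) = 1 := by
    rw [hω2]
    exact_mod_cast congrArg (Int.cast : ℤ → GaussianInt) hxyz
  have hd1 : (A : GaussianInt) ∣ δ * star δ := by
    refine ⟨A * a * star a + a * star ω * star b + b * ω * star a + C * b * star b, ?_⟩
    rw [hbez', hbez]
    linear_combination b * star b * hωω
  have hd2 : δ * star δ ∣ (A : GaussianInt) := by
    refine ⟨x * α * star α + y * γ * star γ + z * (γ * star α + star γ * α), ?_⟩
    linear_combination (-(A : GaussianInt)) * hx + x * (A * hα' + star δ * star α * hα) +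
      y * (ω * hγ' + star δ * star γ * hγ - hωω) +
      z * (ω * hα' + star δ * star α * hγ + star ω * hα + δ * α * hγ')
  have hnorm : δ.norm = A := by
    rw [← Zsqrtd.norm_eq_mul_conj, Zsqrtd.intCast_dvd_intCast] at hd1 hd2
    exact Int.dvd_antisymm (GaussianInt.norm_nonneg δ) hA0.le hd2 hd1
  refine ⟨star δ, γ, ?_, ?_, isPair_iff_star_mul.2 ?_⟩
  · rw [Zsqrtd.norm_conj, hnorm]
  · have := congrArg Zsqrtd.norm hγ
    rw [Zsqrtd.norm_mul, hnorm, norm_eq, hω] at this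
    refine mul_left_cancel₀ hA0.ne' ?_
    rw [← this]
    linear_combination -h.1
  · rw [star_star, ← hγ]

end

section

variable {n : ℕ} {A β C : ℤ}

theorem eq_of_norm_eq_one {k : GaussianInt} (h : k.norm = 1) :
    k = ⟨1, 0⟩ ∨ k = ⟨-1, 0⟩ ∨ k = ⟨0, 1⟩ ∨ k = ⟨0, -1⟩ := by
  rw [norm_eq] at h
  simp only [Zsqrtd.ext_iff]
  have h1 : k.re ≤ 1 := by nlinarith
  have h2 : -1 ≤ k.re := by nlinarith
  have h3 : k.im ≤ 1 := by nlinarith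
  have h4 : -1 ≤ k.im := by nlinarith
  generalize k.re = x at *
  generalize k.im = y at *
  interval_cases x <;> interval_cases y <;> simp_all

theorem IsPair.exists_eq_mul [NeZero n] (h : IsForm n A β C) {v w v' w' : GaussianInt}
    (h1 : IsPair n A β C v w) (h2 : IsPair n A β C v' w') :
    ∃ k : GaussianInt, k.norm = 1 ∧ v = k * v' ∧ w = k * w' := by
  obtain ⟨x, y, z, hxyz⟩ := h.exists_bezout
  have hA0 := h.left_pos
  have hA0' : (A : GaussianInt) ≠ 0 := by exact_mod_cast hA0.ne'
  obtain ⟨hv, hw, h1⟩ := h1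
  obtain ⟨hv', hw', h2⟩ := h2
  have f1 := isPair_iff_star_mul.1 h1
  have f2 := isPair_iff_star_mul.1 h2
  have a1 : v * star v = A := by rw [← Zsqrtd.norm_eq_mul_conj, hv]
  have a2 : v' * star v' = A := by rw [← Zsqrtd.norm_eq_mul_conj, hv']
  have c2 : w' * star w' = C := by rw [← Zsqrtd.norm_eq_mul_conj, hw']
  have hω2 : (⟨β, n⟩ : GaussianInt) + star ⟨β, n⟩ = 2 * (β : GaussianInt) := by
    rw [Zsqrtd.ext_iff]
    simp
    ring
  generalize (⟨β, n⟩ : GaussianInt) = ω at f1 f2 hω2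
  have f2' : v' * star w' = star ω := by rw [← f2, star_mul, star_star, mul_comm]
  have hx : (x : GaussianInt) * A + y * C + z * (ω + star ω) = 1 := by
    rw [hω2]
    exact_mod_cast congrArg (Int.cast : ℤ → GaussianInt) hxyz
  set k := x * (v * star v') + y * (w * star w') + z * (w * star v' + star w' * v) with hk
  have hkA : v * star v' = A * k := by
    rw [hk]
    linear_combination (-(v * star v')) * hx +
      y * (-(v * star v') * c2 + v * star w' * f2 - v * star w' * f1 + w * star w' * a1) +
      z * (-(v * star v') * f1 + w * star v' * a1 - v * star v' * f2' + v * star w' * a2)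
  have hvk : v = k * v' := by
    refine mul_left_cancel₀ hA0' ?_
    linear_combination v' * hkA - v * a2
  refine ⟨k, ?_, hvk, ?_⟩
  · have := congrArg Zsqrtd.norm hvk
    rw [Zsqrtd.norm_mul, hv, hv'] at this
    exact mul_right_cancel₀ hA0.ne' (by linarith)
  · refine mul_left_cancel₀ hA0' ?_
    linear_combination w' * hkA - w * a1 + v * f1 - v * f2

theorem IsPair.exists_gaussUnit [NeZero n] (h : IsForm n A β C) {v w : GaussianInt}
    (hvw : IsPair n A β C v w) : ∃ u ∈ gaussUnits n, cross n v u = 0 ∧ cross n w u = 0 := by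
  obtain ⟨hv, hw, hβ, hdet⟩ := hvw
  classical
  set y : ℤ := ((∏ p ∈ n.primeFactors.filter (fun p : ℕ => ¬ (p : ℤ) ∣ A), p : ℕ) : ℤ) with hy
  have hcop : IsCoprime (A + 2 * β * y + C * y ^ 2) (n : ℤ) := by
    refine isCoprime_intCast_of_forall_prime fun p hp hpn hdvd => ?_
    have hp' := Nat.prime_iff_prime_int.1 hp
    by_cases hpA : (p : ℤ) ∣ A
    · have hpβ : (p : ℤ) ∣ β := by
        refine hp'.dvd_of_dvd_pow (n := 2) ?_
        have : β ^ 2 = A * C - (n : ℤ) ^ 2 := by rw [← h.1]; ring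
        rw [this]
        exact dvd_sub (hpA.mul_right _)
          (dvd_pow (Int.natCast_dvd_natCast.2 hpn) two_ne_zero)
      have hpC := h.2.2.2 p hp hpA hpβ
      have h1 : (p : ℤ) ∣ C * y ^ 2 := by
        have : C * y ^ 2 = (A + 2 * β * y + C * y ^ 2) - A - 2 * β * y := by ring
        rw [this]
        exact dvd_sub (dvd_sub hdvd hpA) ((hpβ.mul_left 2).mul_right y)
      have h2 := hp'.dvd_of_dvd_pow ((hp'.dvd_or_dvd h1).resolve_left hpC)
      rw [hy, Int.natCast_dvd_natCast, hp.prime.dvd_finsetProd_iff] at h2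
      obtain ⟨q, hq, hpq⟩ := h2
      rw [Finset.mem_filter] at hq
      have := (Nat.prime_dvd_prime_iff_eq hp (Nat.prime_of_mem_primeFactors hq.1)).1 hpq
      exact hq.2 (this ▸ hpA)
    · have h1 : (p : ℤ) ∣ y := by
        rw [hy, Int.natCast_dvd_natCast]
        exact Finset.dvd_prod_of_mem _ (Finset.mem_filter.2
          ⟨Nat.mem_primeFactors.2 ⟨hp, hpn, NeZero.ne n⟩, hpA⟩)
      refine hpA ?_
      have : A = (A + 2 * β * y + C * y ^ 2) - y * (2 * β + C * y) := by ring
      rw [this]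
      exact dvd_sub hdvd (h1.mul_right _)
  refine ⟨((v.re + y * w.re : ℤ), (v.im + y * w.im : ℤ)), ?_, ?_, ?_⟩
  · rw [mem_gaussUnits]
    have : ((v.re + y * w.re : ℤ) : ZMod n) ^ 2 + ((v.im + y * w.im : ℤ) : ZMod n) ^ 2 =
        ((A + 2 * β * y + C * y ^ 2 : ℤ) : ZMod n) := by
      rw [← hv, ← hw, ← hβ, norm_eq, norm_eq]
      push_cast
      ring
    rw [this, isUnit_intCast_iff]
    exact hcop
  · unfold cross
    have : ((v.re * w.im - v.im * w.re : ℤ) : ZMod n) = 0 := by rw [hdet]; simp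
    push_cast at this ⊢
    linear_combination -(y : ZMod n) * this
  · unfold cross
    have : ((v.re * w.im - v.im * w.re : ℤ) : ZMod n) = 0 := by rw [hdet]; simp
    push_cast at this ⊢
    linear_combination this

end

section

variable {n : ℕ} [NeZero n] {A β C : ℤ} {u : ZMod n × ZMod n}

/-- The pair `(v, w)`, of Gram matrix `(A, β; β, C)`, is a positively oriented basis of the
lattice `{x | cross n x u = 0}`. -/
def IsBasis (n : ℕ) (u : ZMod n × ZMod n) (A β C : ℤ) (v w : GaussianInt) : Prop :=
  IsPair n A β C v w ∧ cross n v u = 0 ∧ cross n w u = 0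

theorem IsBasis.exists_combo (hu : u ∈ gaussUnits n) {v w x : GaussianInt}
    (h : IsBasis n u A β C v w) (hx : cross n x u = 0) :
    ∃ a c : ℤ, x.re = a * v.re + c * w.re ∧ x.im = a * v.im + c * w.im := by
  obtain ⟨⟨-, -, -, hdet⟩, hv, hw⟩ := h
  obtain ⟨a, ha⟩ := dvd_of_cross_eq_zero hu hx hw
  obtain ⟨c, hc⟩ := dvd_of_cross_eq_zero hu hv hx
  have hn : (n : ℤ) ≠ 0 := by exact_mod_cast NeZero.ne n
  refine ⟨a, c, mul_left_cancel₀ hn ?_, mul_left_cancel₀ hn ?_⟩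
  · linear_combination -x.re * hdet + v.re * ha + w.re * hc
  · linear_combination -x.im * hdet + v.im * ha + w.im * hc

theorem IsBasis.eq_of_reduced (hu : u ∈ gaussUnits n) {A' β' C' : ℤ} {v w v' w' : GaussianInt}
    (h : IsBasis n u A β C v w) (h' : IsBasis n u A' β' C' v' w')
    (h1 : |2 * β| < A) (h2 : A < C) (h1' : |2 * β'| < A') (h2' : A' < C') :
    A' = A ∧ β' = β ∧ C' = C := by
  obtain ⟨a, c, ha, hc⟩ := h.exists_combo hu h'.2.1
  obtain ⟨b, d, hb, hd⟩ := h.exists_combo hu h'.2.2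
  obtain ⟨⟨hv, hw, hβ, hdet⟩, -, -⟩ := h
  obtain ⟨⟨hv', hw', hβ', hdet'⟩, -, -⟩ := h'
  have hn : (n : ℤ) ≠ 0 := by exact_mod_cast NeZero.ne n
  have hg : a * d - b * c = 1 := by
    refine mul_right_cancel₀ hn ?_
    rw [one_mul]
    conv_rhs => rw [← hdet', ha, hb, hc, hd]
    linear_combination (-(a * d - b * c)) * hdet
  rw [norm_eq] at hv hw hv' hw'
  have := ApollonianStair.eq_of_reduced (a := a) (b := b) (c := c) (d := d) h1 h2 h1' h2'
    (by rw [hg, one_pow])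
    (by rw [← hv', ← hv, ← hβ, ← hw, ha, hc]; ring)
    (by rw [← hβ', ← hv, ← hβ, ← hw, ha, hc, hb, hd]; ring)
    (by rw [← hw', ← hv, ← hβ, ← hw, hb, hd]; ring)
  rwa [hg, one_mul] at this

theorem IsBasis.mem_shortUnits_iff (hu : u ∈ gaussUnits n) {v w : GaussianInt}
    (h : IsBasis n u A β C v w) (hA : 0 < A) (h1 : |2 * β| ≤ A) (h2 : A ≤ C) :
    u ∈ shortUnits n ↔ A ≤ n := by
  rw [mem_shortUnits, and_iff_right hu]
  constructor
  · rintro ⟨x, hx0, hxn, hx⟩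
    obtain ⟨a, c, ha, hc⟩ := h.exists_combo hu hx
    obtain ⟨⟨hv, hw, hβ, hdet⟩, -, -⟩ := h
    have hac : a ≠ 0 ∨ c ≠ 0 := by
      by_contra hne
      push Not at hne
      rw [hne.1, hne.2] at ha hc
      refine hx0 (Zsqrtd.ext ?_ ?_)
      · rw [ha]; simp
      · rw [hc]; simp
    have := le_form h1 h2 hac
    rw [norm_eq] at hv hw hxn
    refine (this.trans (le_of_eq ?_)).trans hxn
    rw [ha, hc, ← hv, ← hw, ← hβ]
    ring
  · intro hAn
    obtain ⟨⟨hv, -⟩, hv0, -⟩ := h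
    refine ⟨v, fun hv' => ?_, hv ▸ hAn, hv0⟩
    rw [hv', Zsqrtd.norm_zero] at hv
    exact hA.ne hv

theorem IsBasis.exists_unit_mul {u' : ZMod n × ZMod n} (hu : u ∈ gaussUnits n)
    (hu' : u' ∈ gaussUnits n) {v w : GaussianInt}
    (h : IsBasis n u A β C v w) (h' : IsBasis n u' A β C v w) :
    ∃ s : (ZMod n)ˣ, u' = ((s : ZMod n) * u.1, (s : ZMod n) * u.2) := by
  obtain ⟨X, hX⟩ := ZMod.intCast_surjective u.1
  obtain ⟨Y, hY⟩ := ZMod.intCast_surjective u.2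
  obtain ⟨a, c, ha, hc⟩ := h.exists_combo hu (x := ⟨X, Y⟩) (by
    unfold cross
    simp only [hX, hY]
    ring)
  have hcross : u.2 * u'.1 - u.1 * u'.2 = 0 := by
    have h1 := h'.2.1
    have h2 := h'.2.2
    simp only at ha hc
    unfold cross at h1 h2
    rw [← hX, ← hY, ha, hc]
    push_cast
    linear_combination (a : ZMod n) * h1 + (c : ZMod n) * h2
  obtain ⟨e, he⟩ := mem_gaussUnits.1 hu
  obtain ⟨e', he'⟩ := mem_gaussUnits.1 hu'
  have hei : (e : ZMod n) * (e⁻¹ : (ZMod n)ˣ) = 1 := by simp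
  set r : ZMod n := (u.1 * u'.1 + u.2 * u'.2) * (e⁻¹ : (ZMod n)ˣ) with hr
  have e1 : u'.1 = r * u.1 := by
    rw [hr]
    linear_combination -u'.1 * hei + u'.1 * ((e⁻¹ : (ZMod n)ˣ) : ZMod n) * he +
      ((e⁻¹ : (ZMod n)ˣ) : ZMod n) * u.2 * hcross
  have e2 : u'.2 = r * u.2 := by
    rw [hr]
    linear_combination -u'.2 * hei + u'.2 * ((e⁻¹ : (ZMod n)ˣ) : ZMod n) * he -
      ((e⁻¹ : (ZMod n)ˣ) : ZMod n) * u.1 * hcross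
  have hru : IsUnit r := by
    have : IsUnit (r * (r * (u.1 ^ 2 + u.2 ^ 2))) := by
      have h3 : r * (r * (u.1 ^ 2 + u.2 ^ 2)) = u'.1 ^ 2 + u'.2 ^ 2 := by rw [e1, e2]; ring
      rw [h3]
      exact mem_gaussUnits.1 hu'
    exact isUnit_of_mul_isUnit_left this
  obtain ⟨s, hs⟩ := hru
  exact ⟨s, by rw [hs]; exact Prod.ext e1 e2⟩

theorem exists_reduced_isBasis (hn : 2 ≤ n) (hu : u ∈ gaussUnits n) :
    ∃ A β C v w, IsForm n A β C ∧ IsBasis n u A β C v w ∧ |2 * β| ≤ A ∧ A ≤ C := by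
  obtain ⟨X, hX⟩ := ZMod.intCast_surjective u.1
  obtain ⟨Y, hY⟩ := ZMod.intCast_surjective u.2
  have hcop : IsCoprime (X ^ 2 + Y ^ 2) (n : ℤ) := by
    rw [← isUnit_intCast_iff]
    push_cast
    rw [hX, hY]
    exact mem_gaussUnits.1 hu
  have hg : 0 < Int.gcd X Y := by
    rw [Nat.pos_iff_ne_zero, Ne, Int.gcd_eq_zero_iff]
    rintro ⟨rfl, rfl⟩
    rw [zero_pow two_ne_zero, add_zero, isCoprime_zero_left, Int.isUnit_iff_natAbs_eq,
      Int.natAbs_natCast] at hcop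
    omega
  obtain ⟨a, b, hab, ha, hb⟩ := Int.exists_gcd_one hg
  rw [← Int.isCoprime_iff_gcd_eq_one] at hab
  generalize (Int.gcd X Y : ℤ) = g at ha hb
  obtain ⟨d, c, hdc⟩ := hab
  let R : ℤ → ℤ → ℤ → Prop := fun A β C => IsForm n A β C ∧ ∃ v w : GaussianInt,
    v.norm = A ∧ w.norm = C ∧ v.re * w.re + v.im * w.im = β ∧
      (v.re * w.im - v.im * w.re = n ∨ v.re * w.im - v.im * w.re = -n) ∧
      cross n v u = 0 ∧ cross n w u = 0
  have hinit : R (a ^ 2 + b ^ 2) (n * (-a * c + b * d)) (n ^ 2 * (c ^ 2 + d ^ 2)) := by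
    refine ⟨⟨?_, by positivity, by positivity, fun p hp h1 h2 h3 => ?_⟩,
      ⟨a, b⟩, ⟨n * -c, n * d⟩, ?_, ?_, ?_, Or.inl ?_, ?_, ?_⟩
    · linear_combination (n : ℤ) ^ 2 * (d * a + c * b + 1) * hdc
    · have hpn : ¬ (p : ℤ) ∣ n := fun hpn => by
        refine not_dvd_of_isCoprime hp (Int.natCast_dvd_natCast.1 hpn) hcop ?_
        have : X ^ 2 + Y ^ 2 = (a ^ 2 + b ^ 2) * g ^ 2 := by
          conv_lhs => rw [ha, hb]
          ring
        rw [this]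
        exact h1.mul_right _
      have hp' := Nat.prime_iff_prime_int.1 hp
      have h2' := (hp'.dvd_or_dvd h2).resolve_left hpn
      have : (p : ℤ) ∣ 1 := by
        have e : (1 : ℤ) = (a ^ 2 + b ^ 2) * (c ^ 2 + d ^ 2) -
          (-a * c + b * d) * (-a * c + b * d) := by
            linear_combination -(d * a + c * b + 1) * hdc
        rw [e]
        exact dvd_sub (h1.mul_right _) (h2'.mul_right _)
      exact hp'.not_isUnit (isUnit_of_dvd_one this)
    · rw [norm_eq]
    · rw [norm_eq]
      ring
    · simp only
      ring
    · simp only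
      linear_combination (n : ℤ) * hdc
    · unfold cross
      rw [← hX, ← hY]
      simp only
      have : ((b * X - a * Y : ℤ) : ZMod n) = 0 := by
        conv_lhs => rw [ha, hb]
        push_cast
        ring
      push_cast at this
      exact this
    · unfold cross
      simp
  obtain ⟨A, β, C, ⟨hform, v, w, hv, hw, hβ, hdet, hcv, hcw⟩, h0, h1, h2⟩ :=
    exists_reduced (R := R) (fun h => ⟨h.1.2.1, h.1.2.2.1⟩)
      (fun ⟨hf, v, w, hv, hw, hβ, hdet, hcv, hcw⟩ => ⟨hf.neg, v, -w, hv, by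
          rw [← hw, norm_eq, norm_eq]; simp, by rw [← hβ]; simp; ring, by
          simp only [Zsqrtd.re_neg, Zsqrtd.im_neg]
          rcases hdet with h | h
          · exact Or.inr (by linarith)
          · exact Or.inl (by linarith), hcv, by
          unfold cross at hcw ⊢
          simp only [Zsqrtd.re_neg, Zsqrtd.im_neg]
          push_cast
          linear_combination -hcw⟩)
      (fun ⟨hf, v, w, hv, hw, hβ, hdet, hcv, hcw⟩ => ⟨hf.swap, w, v, hw, hv, by
          rw [← hβ]; ring, by
          rcases hdet with h | h
          · exact Or.inr (by linarith)
          · exact Or.inl (by linarith), hcw, hcv⟩)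
      (fun ⟨hf, v, w, hv, hw, hβ, hdet, hcv, hcw⟩ => ⟨hf.shift, w - v, w, by
          rw [← hv, ← hw, ← hβ, norm_eq, norm_eq, norm_eq]
          simp only [Zsqrtd.re_sub, Zsqrtd.im_sub]
          ring, hw, by
          rw [← hw, ← hβ, norm_eq]
          simp only [Zsqrtd.re_sub, Zsqrtd.im_sub]
          ring, by
          simp only [Zsqrtd.re_sub, Zsqrtd.im_sub]
          rcases hdet with h | h
          · exact Or.inr (by linarith)
          · exact Or.inl (by linarith), by
          unfold cross at hcv hcw ⊢
          simp only [Zsqrtd.re_sub, Zsqrtd.im_sub]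
          push_cast
          linear_combination hcw - hcv, hcw⟩) hinit
  rcases hdet with hdet | hdet
  · exact ⟨A, β, C, v, w, hform, ⟨⟨hv, hw, hβ, hdet⟩, hcv, hcw⟩, by
      rw [abs_of_nonneg (by omega)]; exact h1, h2⟩
  · refine ⟨A, -β, C, v, -w, hform.neg, ⟨⟨hv, ?_, ?_, ?_⟩, hcv, ?_⟩, ?_, h2⟩
    · rw [← hw, norm_eq, norm_eq]; simp
    · rw [← hβ]; simp; ring
    · simp only [Zsqrtd.re_neg, Zsqrtd.im_neg]
      linarith
    · unfold cross at hcw ⊢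
      simp only [Zsqrtd.re_neg, Zsqrtd.im_neg]
      push_cast
      linear_combination -hcw
    · rw [abs_le]
      omega

end

section

/-- Multiplication by `i` on `ℤ[i]`. -/
def mulI (v : GaussianInt) : GaussianInt := ⟨-v.im, v.re⟩

/-- Multiplication by `i` on `ℤ[i] / n`. -/
def rot {n : ℕ} (u : ZMod n × ZMod n) : ZMod n × ZMod n := (-u.2, u.1)

variable {n : ℕ} {A β C : ℤ} {u : ZMod n × ZMod n} {v w : GaussianInt}

theorem IsBasis.rot (h : IsBasis n u A β C v w) :
    IsBasis n (rot u) A β C (mulI v) (mulI w) := by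
  obtain ⟨⟨hv, hw, hβ, hdet⟩, hcv, hcw⟩ := h
  rw [norm_eq] at hv hw
  unfold cross at hcv hcw
  refine ⟨⟨?_, ?_, ?_, ?_⟩, ?_, ?_⟩ <;>
    simp only [norm_eq, mulI, ApollonianStair.rot, cross, Int.cast_neg]
  · linarith
  · linarith
  · linarith
  · linarith
  · linear_combination hcv
  · linear_combination hcw

theorem IsBasis.smul (h : IsBasis n u A β C v w) (s : ZMod n) :
    IsBasis n (s * u.1, s * u.2) A β C v w := by
  obtain ⟨h, hcv, hcw⟩ := h
  unfold cross at hcv hcw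
  refine ⟨h, ?_, ?_⟩ <;> simp only [cross]
  · linear_combination s * hcv
  · linear_combination s * hcw

theorem IsBasis.neg (h : IsBasis n u A β C v w) : IsBasis n u A β C (-v) (-w) := by
  obtain ⟨⟨hv, hw, hβ, hdet⟩, hcv, hcw⟩ := h
  rw [norm_eq] at hv hw
  unfold cross at hcv hcw
  refine ⟨⟨?_, ?_, ?_, ?_⟩, ?_, ?_⟩ <;>
    simp only [norm_eq, cross, Zsqrtd.re_neg, Zsqrtd.im_neg, Int.cast_neg]
  · linarith
  · linarith
  · linarith
  · linarith
  · linear_combination -hcv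
  · linear_combination -hcw

/-- The middle coefficient of a form, with its sign changed if `σ` holds. -/
def mid (σ : Bool) (β : ℤ) : ℤ := cond σ (-β) β

theorem IsForm.mid (h : IsForm n A β C) (σ : Bool) : IsForm n A (mid σ β) C := by
  cases σ
  · exact h
  · exact h.neg

theorem abs_two_mul_mid (σ : Bool) (β : ℤ) : |2 * mid σ β| = |2 * β| := by
  cases σ
  · rfl
  · simp [mid]

section

variable [NeZero n]

theorem rot_mem_gaussUnits (hu : u ∈ gaussUnits n) : rot u ∈ gaussUnits n := by
  rw [mem_gaussUnits] at hu ⊢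
  simpa only [rot, neg_sq, add_comm] using hu

theorem smul_mem_gaussUnits (hu : u ∈ gaussUnits n) (s : (ZMod n)ˣ) :
    ((s : ZMod n) * u.1, (s : ZMod n) * u.2) ∈ gaussUnits n := by
  rw [mem_gaussUnits] at hu ⊢
  simp only [mul_pow, ← mul_add]
  exact (s.isUnit.pow 2).mul hu

theorem unit_eq_of_smul_eq (hu : u ∈ gaussUnits n) {s s' : (ZMod n)ˣ}
    (h1 : (s : ZMod n) * u.1 = s' * u.1) (h2 : (s : ZMod n) * u.2 = s' * u.2) : s = s' := by
  refine Units.ext ((mem_gaussUnits.1 hu).mul_right_cancel ?_)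
  linear_combination u.1 * h1 + u.2 * h2

theorem IsBasis.not_mulI (hn : 2 ≤ n) (hf : IsForm n A β C) (hu : u ∈ gaussUnits n)
    (h : IsBasis n u A β C v w) : ¬ IsBasis n u A β C (mulI v) (mulI w) := by
  intro h'
  obtain ⟨⟨hv, hw, hβ, -⟩, hcv, hcw⟩ := h
  obtain ⟨-, hcv', hcw'⟩ := h'
  have h1 := dvd_of_cross_eq_zero hu hcv hcv'
  have h2 := dvd_of_cross_eq_zero hu hcv hcw'
  have h3 := dvd_of_cross_eq_zero hu hcw hcw'
  simp only [mulI, mul_neg, sub_neg_eq_add] at h1 h2 h3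
  rw [norm_eq] at hv hw
  rw [← pow_two, ← pow_two, hv] at h1
  rw [hβ] at h2
  rw [← pow_two, ← pow_two, hw] at h3
  obtain ⟨p, hp, hpn⟩ := Nat.exists_prime_and_dvd (by omega : n ≠ 1)
  have hpn' := Int.natCast_dvd_natCast.2 hpn
  exact hf.2.2.2 p hp (hpn'.trans h1) (hpn'.trans h2) (hpn'.trans h3)

end

/-- A chosen invertible residue whose lattice has a basis with Gram matrix `(A, β; β, C)`. -/
noncomputable def baseUnit (n : ℕ) [NeZero n] (A β C : ℤ) : ZMod n × ZMod n :=
  Classical.epsilon fun u => u ∈ gaussUnits n ∧ ∃ v w, IsBasis n u A β C v w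

variable [NeZero n]

theorem baseUnit_spec (h : IsForm n A β C) :
    baseUnit n A β C ∈ gaussUnits n ∧ ∃ v w, IsBasis n (baseUnit n A β C) A β C v w := by
  obtain ⟨v, w, hvw⟩ := IsPair.exists_of_isForm h
  obtain ⟨u, hu, hv, hw⟩ := hvw.exists_gaussUnit h
  exact Classical.epsilon_spec (p := fun u => u ∈ gaussUnits n ∧ ∃ v w, IsBasis n u A β C v w)
    ⟨u, hu, v, w, hvw, hv, hw⟩

/-- The invertible residue attached to a unit, a power of `i`, a sign and a form. -/
noncomputable def unitOf (n : ℕ) [NeZero n] (p : (ZMod n)ˣ × Bool × Bool × ℤ × ℤ × ℤ) :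
    ZMod n × ZMod n :=
  let u := baseUnit n p.2.2.2.1 (mid p.2.2.1 p.2.2.2.2.1) p.2.2.2.2.2
  let u' := cond p.2.1 (rot u) u
  ((p.1 : ZMod n) * u'.1, (p.1 : ZMod n) * u'.2)

theorem unitOf_spec (s : (ZMod n)ˣ) (ε σ : Bool) (h : IsForm n A β C) :
    unitOf n (s, ε, σ, A, β, C) ∈ gaussUnits n ∧
      ∃ v w, IsBasis n (unitOf n (s, ε, σ, A, β, C)) A (mid σ β) C v w := by
  obtain ⟨hu, v, w, hvw⟩ := baseUnit_spec (h.mid σ)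
  cases ε
  · exact ⟨smul_mem_gaussUnits hu s, v, w, hvw.smul _⟩
  · exact ⟨smul_mem_gaussUnits (rot_mem_gaussUnits hu) s, _, _, hvw.rot.smul _⟩

theorem exists_unitOf_eq (hn : 2 ≤ n) (hu : u ∈ gaussUnits n) :
    ∃ p, p.2.2.2 ∈ reducedForms n ∧ unitOf n p = u := by
  obtain ⟨A, β, C, v, w, hf, hb, h1, h2⟩ := exists_reduced_isBasis hn hu
  obtain ⟨σ, hσ⟩ : ∃ σ, mid σ |β| = β := by
    rcases abs_cases β with ⟨h, -⟩ | ⟨h, -⟩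
    · exact ⟨false, h⟩
    · exact ⟨true, by rw [h]; exact neg_neg β⟩
  have hmem : (A, |β|, C) ∈ reducedForms n := by
    refine mem_reducedForms.2 ⟨?_, abs_nonneg _, ?_, h2⟩
    · rcases abs_choice β with h | h <;> rw [h]
      · exact hf
      · exact hf.neg
    · rwa [abs_mul, abs_two] at h1
  obtain ⟨hu0, v₀, w₀, hb0⟩ := baseUnit_spec hf
  obtain ⟨k, hk, rfl, rfl⟩ := hb.1.exists_eq_mul hf hb0.1
  have key : IsBasis n u A β C v₀ w₀ ∨ IsBasis n u A β C (mulI v₀) (mulI w₀) := by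
    have e1 : ∀ x : GaussianInt, (⟨1, 0⟩ : GaussianInt) * x = x := fun x => by
      rw [Zsqrtd.ext_iff]; simp
    have e2 : ∀ x : GaussianInt, (⟨-1, 0⟩ : GaussianInt) * x = -x := fun x => by
      rw [Zsqrtd.ext_iff]; simp
    have e3 : ∀ x : GaussianInt, (⟨0, 1⟩ : GaussianInt) * x = mulI x := fun x => by
      rw [Zsqrtd.ext_iff]; simp [mulI]
    have e4 : ∀ x : GaussianInt, (⟨0, -1⟩ : GaussianInt) * x = -mulI x := fun x => by
      rw [Zsqrtd.ext_iff]; simp [mulI]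
    rcases eq_of_norm_eq_one hk with rfl | rfl | rfl | rfl
    · rw [e1, e1] at hb
      exact Or.inl hb
    · rw [e2, e2] at hb
      simpa only [neg_neg] using Or.inl hb.neg
    · rw [e3, e3] at hb
      exact Or.inr hb
    · rw [e4, e4] at hb
      simpa only [neg_neg] using Or.inr hb.neg
  rcases key with hb' | hb'
  · obtain ⟨s, hs⟩ := hb0.exists_unit_mul hu0 hu hb'
    refine ⟨(s, false, σ, A, |β|, C), hmem, ?_⟩
    simp only [unitOf, hσ, cond_false]
    exact hs.symm
  · obtain ⟨s, hs⟩ := hb0.rot.exists_unit_mul (rot_mem_gaussUnits hu0) hu hb'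
    refine ⟨(s, true, σ, A, |β|, C), hmem, ?_⟩
    simp only [unitOf, hσ, cond_true]
    exact hs.symm

theorem unitOf_injOn (hn : 2 ≤ n) :
    Set.InjOn (unitOf n) {p | p.2.2.2 ∈ interiorForms n} := by
  rintro ⟨s, ε, σ, A, β, C⟩ hp ⟨s', ε', σ', A', β', C'⟩ hp' h
  rw [Set.mem_ofPred_eq, mem_interiorForms] at hp hp'
  obtain ⟨hf, h0, h1, h2⟩ := hp
  obtain ⟨hf', h0', h1', h2'⟩ := hp'
  simp only at hf h0 h1 h2 hf' h0' h1' h2'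
  obtain ⟨hu, v, w, hb⟩ := unitOf_spec s ε σ hf
  obtain ⟨-, v', w', hb'⟩ := unitOf_spec s' ε' σ' hf'
  rw [← h] at hb'
  obtain ⟨rfl, hβ, rfl⟩ := hb.eq_of_reduced hu hb'
    (by rw [abs_two_mul_mid, abs_of_pos (by omega)]; exact h1) h2
    (by rw [abs_two_mul_mid, abs_of_pos (by omega)]; exact h1') h2'
  have hσ : σ' = σ ∧ β' = β := by
    cases σ <;> cases σ' <;> simp only [mid, cond_true, cond_false] at hβ <;>
      simp only [true_and, reduceCtorEq, false_and] <;> omega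
  obtain ⟨rfl, rfl⟩ := hσ
  obtain ⟨hu0, v₀, w₀, hb0⟩ := baseUnit_spec (hf.mid σ')
  simp only [unitOf] at h hu
  generalize baseUnit n A' (mid σ' β') C' = u at *
  have hε : ε' = ε := by
    cases ε <;> cases ε' <;> simp only [cond_true, cond_false] at h hu ⊢
    · have h3 := hb0.rot.smul (s' : ZMod n)
      rw [← h] at h3
      exact ((hb0.smul _).not_mulI hn (hf.mid σ') hu h3).elim
    · have h3 := hb0.rot.smul (s : ZMod n)
      rw [h] at h3 hu
      exact ((hb0.smul _).not_mulI hn (hf.mid σ') hu h3).elim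
  subst hε
  have hu1 : cond ε' (rot u) u ∈ gaussUnits n := by
    cases ε'
    · exact hu0
    · exact rot_mem_gaussUnits hu0
  rw [unit_eq_of_smul_eq hu1 (congrArg Prod.fst h) (congrArg Prod.snd h)]

open Classical in
theorem card_params (F : Finset (ℤ × ℤ × ℤ)) :
    ((Finset.univ : Finset (ZMod n)ˣ) ×ˢ (Finset.univ : Finset Bool) ×ˢ
      (Finset.univ : Finset Bool) ×ˢ F).card = 4 * n.totient * F.card := by
  rw [Finset.card_product, Finset.card_product, Finset.card_product, Finset.card_univ,
    ZMod.card_units_eq_totient, Finset.card_univ, Fintype.card_bool]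
  ring

theorem card_le_mul_card_reducedForms (hn : 2 ≤ n) {U : Finset (ZMod n × ZMod n)}
    {P : ℤ × ℤ × ℤ → Prop} [DecidablePred P] (hU : U ⊆ gaussUnits n)
    (hP : ∀ p, p.2.2.2 ∈ reducedForms n → unitOf n p ∈ U → P p.2.2.2) :
    U.card ≤ 4 * n.totient * ((reducedForms n).filter P).card := by
  classical
  rw [← card_params]
  refine (Finset.card_le_card fun u hu => ?_).trans (Finset.card_image_le (f := unitOf n))
  obtain ⟨p, hp, rfl⟩ := exists_unitOf_eq hn (hU hu)
  rw [Finset.mem_image]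
  refine ⟨p, ?_, rfl⟩
  simp only [Finset.mem_product, Finset.mem_univ, true_and, Finset.mem_filter]
  exact ⟨hp, hP p hp hu⟩

theorem mul_card_interiorForms_le (hn : 2 ≤ n) {U : Finset (ZMod n × ZMod n)}
    {P : ℤ × ℤ × ℤ → Prop} [DecidablePred P]
    (hP : ∀ p, p.2.2.2 ∈ reducedForms n → P p.2.2.2 → unitOf n p ∈ U) :
    4 * n.totient * ((interiorForms n).filter P).card ≤ U.card := by
  classical
  rw [← card_params]
  refine Finset.card_le_card_of_injOn (unitOf n) (fun p hp => ?_) fun p hp p' hp' h =>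
    unitOf_injOn hn ?_ ?_ h
  · simp only [Finset.mem_coe, Finset.mem_product, Finset.mem_univ, true_and,
      Finset.mem_filter] at hp
    exact hP p (Finset.mem_filter.1 hp.1).1 hp.2
  · simp only [Finset.mem_coe, Finset.mem_product, Finset.mem_univ, true_and,
      Finset.mem_filter] at hp
    exact hp.1
  · simp only [Finset.mem_coe, Finset.mem_product, Finset.mem_univ, true_and,
      Finset.mem_filter] at hp'
    exact hp'.1

theorem unitOf_mem_shortUnits_iff {p : (ZMod n)ˣ × Bool × Bool × ℤ × ℤ × ℤ}
    (hp : p.2.2.2 ∈ reducedForms n) : unitOf n p ∈ shortUnits n ↔ p.2.2.2.1 ≤ n := by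
  obtain ⟨s, ε, σ, A, β, C⟩ := p
  obtain ⟨hf, h0, h1, h2⟩ := mem_reducedForms.1 hp
  obtain ⟨hu, v, w, hb⟩ := unitOf_spec s ε σ hf
  refine hb.mem_shortUnits_iff hu hf.left_pos ?_ h2
  rw [abs_two_mul_mid, abs_of_nonneg (by have : 0 ≤ β := h0; omega)]
  exact h1

theorem unitOf_mem_gaussUnits {p : (ZMod n)ˣ × Bool × Bool × ℤ × ℤ × ℤ}
    (hp : p.2.2.2 ∈ reducedForms n) : unitOf n p ∈ gaussUnits n := by
  obtain ⟨s, ε, σ, A, β, C⟩ := p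
  exact (unitOf_spec s ε σ (mem_reducedForms.1 hp).1).1

end

section

/-- The Descartes quadruple `(n, a, b, c)` for which `A = n + a`, `C = n + b` and
`2 β = n + a + b - c`. -/
def quadOf (n : ℕ) (A β C : ℤ) : Fin 4 → ℤ := ![n, A - n, C - n, A + C - n - 2 * β]

/-- The orbit of a quadruple under `Ap₁`. -/
def orbit (q : Fin 4 → ℤ) : Set (Fin 4 → ℤ) := {q' | ∃ M ∈ Ap₁, q' = M.mulVec q}

variable {n : ℕ} {A β C : ℤ}

theorem quadOf_injective {A' β' C' : ℤ} (h : quadOf n A β C = quadOf n A' β' C') :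
    A = A' ∧ β = β' ∧ C = C' := by
  have h1 := congrFun h 1
  have h2 := congrFun h 2
  have h3 := congrFun h 3
  simp [quadOf] at h1 h2 h3
  omega

theorem mem_DSet_iff {q : Fin 4 → ℤ} :
    q ∈ DSet n ↔ ∃ A β C, IsForm n A β C ∧ q = quadOf n A β C := by
  constructor
  · rintro ⟨h0, hg, hd, h1, h2⟩
    have hq : ∃ a b c : ℤ, q = ![(n : ℤ), a, b, c] :=
      ⟨q 1, q 2, q 3, by ext i; fin_cases i <;> simp [h0]⟩
    obtain ⟨a, b, c, rfl⟩ := hq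
    simp at hg hd h1 h2
    have heven : Even ((n : ℤ) + a + b + c) := by
      rw [← Int.even_pow' two_ne_zero, hd]
      exact even_two_mul _
    obtain ⟨m, hm⟩ := heven
    refine ⟨n + a, n + a + b - m, n + b, ⟨?_, h1, h2, fun p hp hA hβ hC => ?_⟩, ?_⟩
    · have hc : c = m + m - n - a - b := by linarith
      subst hc
      nlinarith
    · have hp' := Nat.prime_iff_prime_int.1 hp
      have hc : c = m + m - n - a - b := by linarith
      have hpn : (p : ℤ) ∣ n := by
        refine hp'.dvd_of_dvd_pow (n := 2) ?_
        have : (n : ℤ) ^ 2 = (n + a) * (n + b) - (n + a + b - m) * (n + a + b - m) := by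
          subst hc
          nlinarith
        rw [this]
        exact dvd_sub (hA.mul_right _) (hβ.mul_right _)
      have hpa : (p : ℤ) ∣ a := (dvd_add_right hpn).1 hA
      have hpb : (p : ℤ) ∣ b := (dvd_add_right hpn).1 hC
      have hpc : (p : ℤ) ∣ c := by
        have : c = n + a + b - 2 * (n + a + b - m) := by rw [hc]; ring
        rw [this]
        exact dvd_sub (dvd_add (dvd_add hpn hpa) hpb) (hβ.mul_left 2)
      have := Int.dvd_coe_gcd (Int.dvd_coe_gcd (Int.dvd_coe_gcd hpn hpa) hpb) hpc
      rw [hg] at this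
      exact hp'.not_isUnit (isUnit_of_dvd_one (by exact_mod_cast this))
    · ext i
      fin_cases i <;> simp [quadOf]
      linarith
  · rintro ⟨A, β, C, ⟨hdet, hA, hC, hp⟩, rfl⟩
    refine ⟨by simp [quadOf], ?_, ?_, ?_, ?_⟩
    · by_contra hne
      obtain ⟨p, hpp, hpg⟩ := Nat.exists_prime_and_dvd hne
      have hpg' := Int.natCast_dvd_natCast.2 hpg
      have hp' := Nat.prime_iff_prime_int.1 hpp
      have h3 := hpg'.trans (Int.gcd_dvd_right ..)
      have h012 := hpg'.trans (Int.gcd_dvd_left ..)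
      have h2 := h012.trans (Int.gcd_dvd_right ..)
      have h01 := h012.trans (Int.gcd_dvd_left ..)
      have h1 := h01.trans (Int.gcd_dvd_right ..)
      have h0 := h01.trans (Int.gcd_dvd_left ..)
      simp [quadOf] at h0 h1 h2 h3
      have hpA : (p : ℤ) ∣ A := (dvd_sub_left h0).1 h1
      have hpC : (p : ℤ) ∣ C := (dvd_sub_left h0).1 h2
      refine hp p hpp hpA ?_ hpC
      refine hp'.dvd_of_dvd_pow (n := 2) ?_
      have : β ^ 2 = A * C - (n : ℤ) ^ 2 := by rw [← hdet]; ring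
      rw [this]
      exact dvd_sub (hpA.mul_right _) (dvd_pow h0 two_ne_zero)
    · simp [quadOf]
      linear_combination 4 * hdet
    · simpa [quadOf] using hA
    · simpa [quadOf] using hC

theorem S₄_mulVec_quadOf : S₄.mulVec (quadOf n A β C) = quadOf n A (-β) C := by
  ext i
  fin_cases i <;> simp [S₄, quadOf, Matrix.mulVec, dotProduct, Fin.sum_univ_four]
  ring

theorem P₂₃_mulVec_quadOf : P₂₃.mulVec (quadOf n A β C) = quadOf n C β A := by
  ext i
  fin_cases i <;> simp [P₂₃, quadOf, Matrix.mulVec, dotProduct, Fin.sum_univ_four]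
  ring

theorem P₂₄_mulVec_quadOf :
    P₂₄.mulVec (quadOf n A β C) = quadOf n (A + C - 2 * β) (C - β) C := by
  ext i
  fin_cases i <;> simp [P₂₄, quadOf, Matrix.mulVec, dotProduct, Fin.sum_univ_four] <;> ring

theorem S₄_mem : S₄ ∈ Ap₁ := Submonoid.subset_closure (by simp)

theorem P₂₃_mem : P₂₃ ∈ Ap₁ := Submonoid.subset_closure (by simp)

theorem P₂₄_mem : P₂₄ ∈ Ap₁ := Submonoid.subset_closure (by simp)

theorem exists_inv_mem {M : Matrix (Fin 4) (Fin 4) ℤ} (hM : M ∈ Ap₁) : ∃ N ∈ Ap₁, N * M = 1 := by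
  induction hM using Submonoid.closure_induction with
  | mem M hM =>
    refine ⟨M, Submonoid.subset_closure hM, ?_⟩
    simp only [Set.mem_insert_iff, Set.mem_singleton_iff] at hM
    rcases hM with rfl | rfl | rfl <;> decide
  | one => exact ⟨1, one_mem _, one_mul 1⟩
  | mul M M' _ _ h h' =>
    obtain ⟨N, hN, h⟩ := h
    obtain ⟨N', hN', h'⟩ := h'
    exact ⟨N' * N, mul_mem hN' hN, by rw [mul_assoc, ← mul_assoc N, h, one_mul, h']⟩

theorem mem_orbit_self (q : Fin 4 → ℤ) : q ∈ orbit q := ⟨1, one_mem _, (Matrix.one_mulVec q).symm⟩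

theorem mulVec_mem_orbit {q q' : Fin 4 → ℤ} {M : Matrix (Fin 4) (Fin 4) ℤ} (hM : M ∈ Ap₁)
    (h : q' ∈ orbit q) : M.mulVec q' ∈ orbit q := by
  obtain ⟨N, hN, rfl⟩ := h
  exact ⟨M * N, mul_mem hM hN, by rw [Matrix.mulVec_mulVec]⟩

theorem orbit_eq_of_mem {q q' : Fin 4 → ℤ} (h : q' ∈ orbit q) : orbit q' = orbit q := by
  refine Set.Subset.antisymm ?_ ?_
  · rintro _ ⟨M, hM, rfl⟩
    exact mulVec_mem_orbit hM h
  · rintro _ ⟨M, hM, rfl⟩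
    obtain ⟨M', hM', rfl⟩ := h
    obtain ⟨N, hN, hNM⟩ := exists_inv_mem hM'
    exact ⟨M * N, mul_mem hM hN, by
      rw [Matrix.mulVec_mulVec, mul_assoc, hNM, mul_one]⟩

theorem exists_transform {M : Matrix (Fin 4) (Fin 4) ℤ} (hM : M ∈ Ap₁) (A β C : ℤ) :
    ∃ a b c d A' β' C' : ℤ, M.mulVec (quadOf n A β C) = quadOf n A' β' C' ∧
      (a * d - b * c) ^ 2 = 1 ∧ A' = A * a ^ 2 + 2 * β * a * c + C * c ^ 2 ∧
      β' = A * a * b + β * (a * d + b * c) + C * c * d ∧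
      C' = A * b ^ 2 + 2 * β * b * d + C * d ^ 2 := by
  induction hM using Submonoid.closure_induction generalizing A β C with
  | mem M hM =>
    simp only [Set.mem_insert_iff, Set.mem_singleton_iff] at hM
    rcases hM with rfl | rfl | rfl
    · exact ⟨0, 1, 1, 0, _, _, _, P₂₃_mulVec_quadOf, by norm_num, by ring, by ring, by ring⟩
    · exact ⟨1, 0, -1, -1, _, _, _, P₂₄_mulVec_quadOf, by norm_num, by ring, by ring, by ring⟩
    · exact ⟨1, 0, 0, -1, _, _, _, S₄_mulVec_quadOf, by norm_num, by ring, by ring, by ring⟩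
  | one =>
    exact ⟨1, 0, 0, 1, _, _, _, Matrix.one_mulVec _, by norm_num, by ring, by ring, by ring⟩
  | mul M N _ _ h h' =>
    obtain ⟨a, b, c, d, A₁, β₁, C₁, h1, hdet, hA, hβ, hC⟩ := h' A β C
    obtain ⟨a', b', c', d', A₂, β₂, C₂, h1', hdet', hA', hβ', hC'⟩ := h A₁ β₁ C₁
    refine ⟨a' * a + c' * b, b' * a + d' * b, a' * c + c' * d, b' * c + d' * d, A₂, β₂, C₂,
      ?_, ?_, ?_, ?_, ?_⟩
    · rw [← Matrix.mulVec_mulVec, h1, h1']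
    · linear_combination (a' * d' - b' * c') ^ 2 * hdet + hdet'
    · rw [hA', hA, hβ, hC]; ring
    · rw [hβ', hA, hβ, hC]; ring
    · rw [hC', hA, hβ, hC]; ring

theorem exists_reduced_mem_orbit [NeZero n] (h : IsForm n A β C) :
    ∃ t ∈ reducedForms n, quadOf n t.1 t.2.1 t.2.2 ∈ orbit (quadOf n A β C) := by
  obtain ⟨A', β', C', ⟨hf, ho⟩, h0, h1, h2⟩ := exists_reduced
    (R := fun A' β' C' => IsForm n A' β' C' ∧ quadOf n A' β' C' ∈ orbit (quadOf n A β C))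
    (fun h => ⟨h.1.2.1, h.1.2.2.1⟩)
    (fun h => ⟨h.1.neg, by
      have := mulVec_mem_orbit S₄_mem h.2
      rwa [S₄_mulVec_quadOf] at this⟩)
    (fun h => ⟨h.1.swap, by
      have := mulVec_mem_orbit P₂₃_mem h.2
      rwa [P₂₃_mulVec_quadOf] at this⟩)
    (fun h => ⟨h.1.shift, by
      have := mulVec_mem_orbit P₂₄_mem h.2
      rwa [P₂₄_mulVec_quadOf] at this⟩)
    ⟨h, mem_orbit_self _⟩
  exact ⟨(A', β', C'), mem_reducedForms.2 ⟨hf, h0, h1, h2⟩, ho⟩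

/-- The orbit of the quadruple of a form. -/
def formOrbit (n : ℕ) (t : ℤ × ℤ × ℤ) : Set (Fin 4 → ℤ) := orbit (quadOf n t.1 t.2.1 t.2.2)

theorem ID_eq [NeZero n] : ID n = formOrbit n '' (reducedForms n : Set (ℤ × ℤ × ℤ)) := by
  ext O
  constructor
  · rintro ⟨q, hq, rfl⟩
    obtain ⟨A, β, C, hf, rfl⟩ := mem_DSet_iff.1 hq
    obtain ⟨t, ht, ho⟩ := exists_reduced_mem_orbit hf
    exact ⟨t, ht, orbit_eq_of_mem ho⟩
  · rintro ⟨t, ht, rfl⟩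
    exact ⟨_, mem_DSet_iff.2 ⟨_, _, _, (mem_reducedForms.1 ht).1, rfl⟩, rfl⟩

theorem formOrbit_injOn [NeZero n] :
    Set.InjOn (formOrbit n) (interiorForms n : Set (ℤ × ℤ × ℤ)) := by
  rintro ⟨A, β, C⟩ ht ⟨A', β', C'⟩ ht' h
  rw [Finset.mem_coe, mem_interiorForms] at ht ht'
  obtain ⟨hf, h0, h1, h2⟩ := ht
  obtain ⟨hf', h0', h1', h2'⟩ := ht'
  simp only at hf h0 h1 h2 hf' h0' h1' h2'
  have hmem : quadOf n A' β' C' ∈ formOrbit n (A, β, C) := by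
    rw [h]
    exact mem_orbit_self _
  obtain ⟨M, hM, hq⟩ := hmem
  obtain ⟨a, b, c, d, A₁, β₁, C₁, hM, hdet, hA, hβ, hC⟩ := exists_transform (n := n) hM A β C
  obtain ⟨rfl, rfl, rfl⟩ := quadOf_injective (hq.trans hM)
  obtain ⟨rfl, hβ', rfl⟩ := eq_of_reduced (by rw [abs_of_pos (by omega)]; exact h1) h2
    (by rw [abs_of_pos (by omega)]; exact h1') h2' hdet hA hβ hC
  have hdet1 : a * d - b * c = 1 := by
    have hu := Int.isUnit_iff.1 (IsUnit.of_mul_eq_one (M := ℤ) (a := a * d - b * c)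
      (a * d - b * c) (by linear_combination hdet))
    refine hu.resolve_right fun hneg => ?_
    rw [hneg] at hβ'
    omega
  rw [hdet1, one_mul] at hβ'
  rw [hβ']

theorem exists_nonpos_iff [NeZero n] {t : ℤ × ℤ × ℤ} (ht : t ∈ reducedForms n) :
    (∃ q ∈ formOrbit n t, ∃ i : Fin 4, q i ≤ 0) ↔ t.1 ≤ n := by
  obtain ⟨A, β, C⟩ := t
  obtain ⟨hf, h0, h1, h2⟩ := mem_reducedForms.1 ht
  simp only at hf h0 h1 h2 ⊢
  have hβ2 : |2 * β| ≤ A := by rw [abs_of_nonneg (by omega)]; exact h1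
  constructor
  · rintro ⟨q, ⟨M, hM, rfl⟩, i, hi⟩
    simp only at hi
    obtain ⟨a, b, c, d, A', β', C', hM, hdet, hA, hβ, hC⟩ := exists_transform (n := n) hM A β C
    rw [hM] at hi
    have hn := NeZero.pos n
    have hne : ∀ x y : ℤ, (x * (a * d - b * c)) ^ 2 + y = x ^ 2 + y := fun x y => by
      rw [mul_pow, hdet, mul_one]
    fin_cases i
    · simp [quadOf] at hi
      omega
    · refine (le_form (x := a) (y := c) hβ2 h2 ?_).trans (hA ▸ ?_)
      · by_contra hh
        push Not at hh
        simp [hh.1, hh.2] at hdet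
      · simpa [quadOf] using hi
    · refine (le_form (x := b) (y := d) hβ2 h2 ?_).trans (hC ▸ ?_)
      · by_contra hh
        push Not at hh
        simp [hh.1, hh.2] at hdet
      · simpa [quadOf] using hi
    · refine (le_form (x := a - b) (y := c - d) hβ2 h2 ?_).trans ?_
      · by_contra hh
        push Not at hh
        have e1 : a = b := by linarith [hh.1]
        have e2 : c = d := by linarith [hh.2]
        subst e1 e2
        simp at hdet
      · simp [quadOf] at hi
        rw [hA, hβ, hC] at hi
        linarith
  · intro hA
    exact ⟨_, mem_orbit_self _, 1, by simpa [quadOf] using hA⟩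

theorem ID₀_eq [NeZero n] :
    ID₀ n = formOrbit n '' ↑((reducedForms n).filter fun t => t.1 ≤ (n : ℤ)) := by
  ext O
  constructor
  · rintro ⟨hO, h⟩
    rw [ID_eq] at hO
    obtain ⟨t, ht, rfl⟩ := hO
    exact ⟨t, Finset.mem_coe.2 (Finset.mem_filter.2 ⟨ht, (exists_nonpos_iff ht).1 h⟩), rfl⟩
  · rintro ⟨t, ht, rfl⟩
    obtain ⟨ht, hA⟩ := Finset.mem_filter.1 (Finset.mem_coe.1 ht)
    exact ⟨ID_eq (n := n) ▸ ⟨t, ht, rfl⟩, (exists_nonpos_iff ht).2 hA⟩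

theorem card_interiorForms_filter_le_ncard [NeZero n] (P : ℤ × ℤ × ℤ → Prop) [DecidablePred P] :
    ((interiorForms n).filter P).card ≤
      (formOrbit n '' ((reducedForms n).filter P : Set (ℤ × ℤ × ℤ))).ncard := by
  rw [← Set.ncard_coe_finset, ← (formOrbit_injOn.mono
    (Finset.coe_subset.2 (Finset.filter_subset P _))).ncard_image]
  refine Set.ncard_le_ncard (Set.image_mono (Finset.coe_subset.2 ?_))
    ((Finset.finite_toSet _).image _)
  exact Finset.filter_subset_filter _ (Finset.filter_subset _ _)

theorem ncard_le_card_reducedForms_filter (P : ℤ × ℤ × ℤ → Prop) [DecidablePred P] :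
    (formOrbit n '' ((reducedForms n).filter P : Set (ℤ × ℤ × ℤ))).ncard ≤
      ((reducedForms n).filter P).card := by
  rw [← Set.ncard_coe_finset]
  exact Set.ncard_image_le (Finset.finite_toSet _)

end

theorem abs_mul_ncard_sub_le {n : ℕ} [NeZero n] (hn : 2 ≤ n) {U : Finset (ZMod n × ZMod n)}
    {P : ℤ × ℤ × ℤ → Prop} [DecidablePred P] (hU : U ⊆ gaussUnits n)
    (hP : ∀ p, p.2.2.2 ∈ reducedForms n → (unitOf n p ∈ U ↔ P p.2.2.2)) :
    |4 * (n.totient : ℝ) * (formOrbit n '' ((reducedForms n).filter P : Set (ℤ × ℤ × ℤ))).ncard -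
      U.card| ≤ 12 * n * (4 * n ^ 2).divisors.card := by
  have h1 := card_le_mul_card_reducedForms hn hU fun p hp => (hP p hp).1
  have h2 := mul_card_interiorForms_le hn fun p hp => (hP p hp).2
  have h3 := card_interiorForms_filter_le_ncard (n := n) P
  have h4 := ncard_le_card_reducedForms_filter (n := n) P
  have h5 := card_reducedForms_filter_le n P
  have h6 := n.totient_le
  generalize (formOrbit n '' ((reducedForms n).filter P : Set (ℤ × ℤ × ℤ))).ncard = I at *
  generalize ((reducedForms n).filter P).card = R at *
  generalize ((interiorForms n).filter P).card = G at *
  generalize (4 * n ^ 2).divisors.card = d at *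
  have h7 : 4 * n.totient * (3 * d) ≤ 12 * n * d := by
    calc 4 * n.totient * (3 * d) = n.totient * (12 * d) := by ring
      _ ≤ n * (12 * d) := Nat.mul_le_mul_right _ h6
      _ = 12 * n * d := by ring
  have h8 : 4 * n.totient * R ≤ 4 * n.totient * G + 12 * n * d := by
    calc 4 * n.totient * R ≤ 4 * n.totient * (G + 3 * d) := Nat.mul_le_mul_left _ h5
      _ = 4 * n.totient * G + 4 * n.totient * (3 * d) := by ring
      _ ≤ _ := Nat.add_le_add_left h7 _
  have h9 : 4 * n.totient * I ≤ U.card + 12 * n * d :=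
    (Nat.mul_le_mul_left _ h4).trans (h8.trans (Nat.add_le_add_right h2 _))
  have h10 : U.card ≤ 4 * n.totient * I + 12 * n * d :=
    h1.trans (h8.trans (Nat.add_le_add_right (Nat.mul_le_mul_left _ h3) _))
  have h9' : 4 * (n.totient : ℝ) * I ≤ U.card + 12 * n * d := by exact_mod_cast h9
  have h10' : (U.card : ℝ) ≤ 4 * n.totient * I + 12 * n * d := by exact_mod_cast h10
  rw [abs_le]
  constructor <;> linarith

theorem abs_mul_ncard_ID_sub_le {n : ℕ} [NeZero n] (hn : 2 ≤ n) :
    |4 * (n.totient : ℝ) * (ID n).ncard - (gaussUnits n).card| ≤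
      12 * n * (4 * n ^ 2).divisors.card := by
  have := abs_mul_ncard_sub_le hn (P := fun _ => True) (Finset.Subset.refl (gaussUnits n))
    fun p hp => iff_true_intro (unitOf_mem_gaussUnits hp)
  rwa [Finset.filter_true, ← ID_eq] at this

theorem abs_mul_ncard_ID₀_sub_le {n : ℕ} [NeZero n] (hn : 2 ≤ n) :
    |4 * (n.totient : ℝ) * (ID₀ n).ncard - (shortUnits n).card| ≤
      12 * n * (4 * n ^ 2).divisors.card := by
  rw [ID₀_eq]
  exact abs_mul_ncard_sub_le hn (fun u hu => (mem_shortUnits.1 hu).1)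
    fun p hp => unitOf_mem_shortUnits_iff hp

theorem exists_ncard_div_eq : ∃ c : ℝ, ∀ n : ℕ, 2 ≤ n → ∃ e₀ e : ℝ,
    |e₀| ≤ c / (n : ℝ) ^ (1 / 16 : ℝ) ∧ |e| ≤ c / (n : ℝ) ^ (1 / 16 : ℝ) ∧
    ((ID₀ n).ncard : ℝ) / (ID n).ncard =
      (Real.pi / 2 * ∑ k ∈ Finset.Ioc 0 n, (ArithmeticFunction.moebius k : ℝ) / (k : ℝ) ^ 2 + e₀) /
        (1 + e) := by
  obtain ⟨K, hK, hs⟩ := exists_two_pow_card_primeSet_le (ε := 1 / 16) (by norm_num)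
  obtain ⟨K', hK', hd⟩ := exists_card_divisors_le (ε := 1 / 16) (by norm_num)
  refine ⟨12 * K * K' + (8 * Real.pi + 1) * K' * K * 17 * K, fun n hn => ?_⟩
  have : NeZero n := ⟨by omega⟩
  have hn0 : n ≠ 0 := by omega
  have hnR : (2 : ℝ) ≤ n := by exact_mod_cast hn
  have hpi := Real.pi_pos
  have hI := abs_mul_ncard_ID_sub_le hn
  have hI₀ := abs_mul_ncard_ID₀_sub_le hn
  have hS := abs_two_mul_card_shortUnits_sub_le hn
  have hL := sq_le_card_gaussUnits_mul n
  have hsn := hs n hn0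
  have hdn := hd n hn0
  have hd4 := hd (4 * n ^ 2) (by positivity)
  have hlog := Real.log_le_rpow_div (Nat.cast_nonneg n) (by norm_num : (0 : ℝ) < 1 / 16)
  set T : ℝ := (n : ℝ) ^ (1 / 16 : ℝ) with hT
  have hT1 : 1 ≤ T := Real.one_le_rpow (by linarith) (by norm_num)
  have hT16 : (n : ℝ) = T ^ 16 := by
    rw [hT, ← Real.rpow_natCast, ← Real.rpow_mul (by positivity)]
    norm_num
  have hsqrt : √(n : ℝ) = T ^ 8 := by
    rw [hT16, show T ^ 16 = (T ^ 8) ^ 2 by ring, Real.sqrt_sq (by positivity)]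
  have hd4' : ((4 * n ^ 2).divisors.card : ℝ) ≤ K' * T ^ 4 := by
    refine hd4.trans (mul_le_mul_of_nonneg_left ?_ hK'.le)
    have h4 : ((4 * n ^ 2 : ℕ) : ℝ) ≤ (T ^ 4) ^ 16 := by
      have e1 : (T ^ 4) ^ 16 = (n : ℝ) ^ 4 := by rw [hT16]; ring
      rw [e1]
      push_cast
      have : (4 : ℝ) ≤ (n : ℝ) ^ 2 := by nlinarith
      nlinarith [sq_nonneg (n : ℝ)]
    refine (Real.rpow_le_rpow (Nat.cast_nonneg _) h4 (by norm_num)).trans_eq ?_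
    rw [← Real.rpow_natCast, ← Real.rpow_mul (by positivity)]
    norm_num
  have hlog' : 1 + Real.log n ≤ 17 * T := by linarith
  have hlog0 : 0 ≤ 1 + Real.log n := by
    have := Real.log_nonneg (by linarith : (1 : ℝ) ≤ n)
    linarith
  have hs0 : (0 : ℝ) < 2 ^ (primeSet n).card := by positivity
  generalize (2 : ℝ) ^ (primeSet n).card = s at *
  generalize ((4 * n ^ 2).divisors.card : ℝ) = d4 at *
  have hd0 : (0 : ℝ) ≤ n.divisors.card := Nat.cast_nonneg _
  generalize (n.divisors.card : ℝ) = d at *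
  generalize ((gaussUnits n).card : ℝ) = L at *
  generalize ((shortUnits n).card : ℝ) = S at *
  generalize ∑ k ∈ Finset.Ioc 0 n, (ArithmeticFunction.moebius k : ℝ) / (k : ℝ) ^ 2 = M at *
  generalize 1 + Real.log n = l at *
  rw [hsqrt] at hS
  rw [hT16] at hL hI hI₀ hS
  have hL32 : T ^ 31 ≤ L * K := by
    have h1 : T ^ 31 * T ≤ L * K * T := by
      calc T ^ 31 * T = (T ^ 16) ^ 2 := by ring
        _ ≤ L * s := hL
        _ ≤ L * (K * T) := by
          refine mul_le_mul_of_nonneg_left hsn ?_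
          by_contra hneg
          have : 0 < (T ^ 16) ^ 2 := by positivity
          nlinarith
        _ = L * K * T := by ring
    exact le_of_mul_le_mul_right h1 (by linarith)
  have hL0 : 0 < L := by
    have : 0 < T ^ 31 := by positivity
    nlinarith
  have hT0 : 0 < T := by linarith
  have key1 : 12 * T ^ 16 * d4 ≤ 12 * K * K' / T * L := by
    calc 12 * T ^ 16 * d4 ≤ 12 * T ^ 16 * (K' * T ^ 4) := by gcongr
      _ = 12 * K' * T ^ 20 := by ring
      _ ≤ 12 * K' * T ^ 30 := by gcongr; norm_num
      _ = 12 * K' / T * T ^ 31 := by field_simp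
      _ ≤ 12 * K' / T * (L * K) := by gcongr
      _ = 12 * K * K' / T * L := by ring
  have key2 : (8 * Real.pi + 1) * T ^ 16 * d * s * T ^ 8 * l ≤
      (8 * Real.pi + 1) * K' * K * 17 * K / T * L := by
    calc (8 * Real.pi + 1) * T ^ 16 * d * s * T ^ 8 * l
        ≤ (8 * Real.pi + 1) * T ^ 16 * (K' * T) * (K * T) * T ^ 8 * (17 * T) := by gcongr
      _ = (8 * Real.pi + 1) * K' * K * 17 * T ^ 27 := by ring
      _ ≤ (8 * Real.pi + 1) * K' * K * 17 * T ^ 30 := by gcongr; norm_num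
      _ = (8 * Real.pi + 1) * K' * K * 17 / T * T ^ 31 := by field_simp
      _ ≤ (8 * Real.pi + 1) * K' * K * 17 / T * (L * K) := by gcongr
      _ = (8 * Real.pi + 1) * K' * K * 17 * K / T * L := by ring
  have hφ : (n.totient : ℝ) ≠ 0 := by
    exact_mod_cast (Nat.totient_pos.2 (NeZero.pos n)).ne'
  have hc1 : 0 ≤ 12 * K * K' / T := by positivity
  have hc2 : 0 ≤ (8 * Real.pi + 1) * K' * K * 17 * K / T := by positivity
  refine ⟨4 * n.totient * (ID₀ n).ncard / L - Real.pi / 2 * M,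
    4 * n.totient * (ID n).ncard / L - 1, ?_, ?_, ?_⟩
  · rw [← mul_le_mul_iff_left₀ hL0, ← abs_of_pos hL0, ← abs_mul, abs_of_pos hL0, sub_mul,
      div_mul_cancel₀ _ hL0.ne', add_div, add_mul]
    rw [abs_le] at hI₀ hS ⊢
    constructor <;> nlinarith
  · rw [← mul_le_mul_iff_left₀ hL0, ← abs_of_pos hL0, ← abs_mul, abs_of_pos hL0, sub_mul,
      div_mul_cancel₀ _ hL0.ne', one_mul, add_div, add_mul]
    exact (hI.trans key1).trans (le_add_of_nonneg_right (by positivity))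
  · rw [add_sub_cancel, add_sub_cancel, div_div_div_cancel_right₀ hL0.ne',
      mul_div_mul_left _ _ (mul_ne_zero four_ne_zero hφ)]

end ApollonianStair

/-- As `n → ∞`, the proportion of primitive integral `n`-quadruple classes whose
packing contains a circle of nonpositive curvature tangent to the circle of
curvature `n` tends to `3/π`. -/
theorem apollonian_bottom_stair_probability :
    Filter.Tendsto (fun n : ℕ => ((ID₀ (n : ℤ)).ncard : ℝ) / ((ID (n : ℤ)).ncard : ℝ))
      Filter.atTop (nhds (3 / Real.pi)) := by
  obtain ⟨c, hc⟩ := ApollonianStair.exists_ncard_div_eq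
  choose! e₀ e he₀ he heq using hc
  have hlim : Filter.Tendsto (fun n : ℕ => c / (n : ℝ) ^ (1 / 16 : ℝ)) Filter.atTop (nhds 0) :=
    ((tendsto_rpow_atTop (by norm_num)).comp tendsto_natCast_atTop_atTop).const_div_atTop c
  have h0 : Filter.Tendsto e₀ Filter.atTop (nhds 0) :=
    squeeze_zero_norm' (Filter.eventually_atTop.2 ⟨2, he₀⟩) hlim
  have h1 : Filter.Tendsto e Filter.atTop (nhds 0) :=
    squeeze_zero_norm' (Filter.eventually_atTop.2 ⟨2, he⟩) hlim
  have h := ((ApollonianStair.tendsto_sum_moebius_div_sq.const_mul (Real.pi / 2)).add h0).div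
    (h1.const_add 1) (by norm_num)
  have hpi := Real.pi_ne_zero
  have hval : (Real.pi / 2 * (6 / Real.pi ^ 2) + 0) / (1 + 0) = 3 / Real.pi := by
    field_simp
    norm_num
  rw [hval] at h
  exact h.congr' (Filter.eventually_atTop.2 ⟨2, fun n hn => (heq n hn).symm⟩)
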